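/- arXiv:2604.22267 — 2 statements merged into one kernel-verified Lean document; each statement's English description precedes it below -/
import Mathlib

section
/- Let q be a real number with 0 < q < 1. Then Ω₁² + Ω₂² = ψ(q²)⁴/ψ(−q⁵)⁴ + q⁴·ψ(q^{10})⁴/ψ(−q⁵)⁴ − 2q²·ψ(q²)²·ψ(q^{10})²/ψ(−q⁵)⁴ + 2q·φ(−q^{10})·ψ(−q)/(φ(−q)·ψ(q⁵)). -/
/-- Ramanujan's theta function `f(a,b) = ∑_{n ∈ ℤ} a^(n(n+1)/2) b^(n(n-1)/2)`. -/
noncomputable def ramTheta (a b : ℂ) : ℂ :=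
  ∑' n : ℤ, a ^ ((n * (n + 1)) / 2).toNat * b ^ ((n * (n - 1)) / 2).toNat

/-- `φ(q) = f(q,q)`. -/
noncomputable def phi (q : ℂ) : ℂ := ramTheta q q

/-- `ψ(q) = f(q,q³)`. -/
noncomputable def psi (q : ℂ) : ℂ := ramTheta q (q ^ 3)

/-- `(a;q)_∞ = ∏_{k=0}^∞ (1 - a q^k)`. -/
noncomputable def qPochInf (a q : ℂ) : ℂ := ∏' k : ℕ, (1 - a * q ^ k)

noncomputable def Omega1 (q : ℝ) : ℂ :=
  ramTheta ((q : ℂ) ^ 4) ((q : ℂ) ^ 6) / ramTheta (-(q : ℂ)) (-(q : ℂ) ^ 9)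

noncomputable def Omega2 (q : ℝ) : ℂ :=
  (q : ℂ) * ramTheta ((q : ℂ) ^ 2) ((q : ℂ) ^ 8) / ramTheta (-(q : ℂ) ^ 3) (-(q : ℂ) ^ 7)


open Filter Topology

lemma hs_congr {ι : Type*} {f g : ι → ℂ} {s : ℂ} (h : ∀ j, f j = g j) (hg : HasSum g s) :
    HasSum f s := by
  rwa [funext h]

/-- General term of the theta series with integer exponents. -/
noncomputable def tt (a b : ℂ) (n : ℤ) : ℂ := a ^ ((n * (n + 1)) / 2) * b ^ ((n * (n - 1)) / 2)

lemma two_T (n : ℤ) : 2 * ((n * (n + 1)) / 2) = n * (n + 1) :=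
  Int.mul_ediv_cancel' (Int.even_mul_succ_self n).two_dvd

lemma two_T' (n : ℤ) : 2 * ((n * (n - 1)) / 2) = n * (n - 1) :=
  Int.mul_ediv_cancel' (Int.even_mul_pred_self n).two_dvd

lemma T_nonneg (n : ℤ) : 0 ≤ (n * (n + 1)) / 2 := by
  have h := two_T n
  rcases le_or_gt 0 n with h0 | h0 <;> nlinarith

lemma T'_nonneg (n : ℤ) : 0 ≤ (n * (n - 1)) / 2 := by
  have h := two_T' n
  rcases le_or_gt n 0 with h0 | h0 <;> nlinarith

lemma tt_eq (a b : ℂ) (n : ℤ) :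
    a ^ ((n * (n + 1)) / 2).toNat * b ^ ((n * (n - 1)) / 2).toNat = tt a b n := by
  unfold tt
  rw [← zpow_natCast, ← zpow_natCast, Int.toNat_of_nonneg (T_nonneg n),
    Int.toNat_of_nonneg (T'_nonneg n)]

lemma ramTheta_eq (a b : ℂ) : ramTheta a b = ∑' n : ℤ, tt a b n := by
  unfold ramTheta
  simp_rw [tt_eq]

lemma summable_tt {a b : ℂ} (ha : ‖a‖ < 1) (hb : ‖b‖ < 1) : Summable (fun n => ‖tt a b n‖) := by
  obtain ⟨r, hr0, hr1, har, hbr⟩ : ∃ r : ℝ, 0 ≤ r ∧ r < 1 ∧ ‖a‖ ≤ r ∧ ‖b‖ ≤ r :=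
    ⟨max ‖a‖ ‖b‖, le_max_of_le_left (norm_nonneg _), max_lt ha hb, le_max_left _ _,
      le_max_right _ _⟩
  have hs : Summable (fun n : ℤ => r ^ n.natAbs) := by
    rw [summable_int_iff_summable_nat_and_neg]
    constructor <;> simpa using summable_geometric_of_lt_one hr0 hr1
  refine Summable.of_nonneg_of_le (fun _ => norm_nonneg _) (fun n => ?_) hs
  rw [← tt_eq, norm_mul, norm_pow, norm_pow]
  calc _ ≤ r ^ ((n * (n + 1)) / 2).toNat * r ^ ((n * (n - 1)) / 2).toNat := by gcongr
    _ = r ^ (((n * (n + 1)) / 2).toNat + ((n * (n - 1)) / 2).toNat) := by rw [pow_add]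
    _ ≤ _ := by
      apply pow_le_pow_of_le_one hr0 hr1.le
      zify
      rw [Int.toNat_of_nonneg (T_nonneg n), Int.toNat_of_nonneg (T'_nonneg n)]
      have h1 := two_T n
      have h2 := two_T' n
      have h3 : n ^ 2 = |n| ^ 2 := (sq_abs n).symm
      have h4 : |n| ≤ |n| ^ 2 := by
        have := Int.le_self_sq |n|
        simpa using this
      linarith

/-! ### q-Pochhammer symbols -/

lemma summ_poch {a p : ℂ} (hp : ‖p‖ < 1) : Summable (fun k : ℕ => ‖-(a * p ^ k)‖) := by
  simp only [norm_neg, norm_mul, norm_pow]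
  exact (summable_geometric_of_lt_one (norm_nonneg _) hp).mul_left _

lemma mult_poch {a p : ℂ} (hp : ‖p‖ < 1) : Multipliable (fun k : ℕ => 1 - a * p ^ k) := by
  simpa [sub_eq_add_neg] using multipliable_one_add_of_summable (summ_poch (a := a) hp)

lemma tendsto_poch {a p : ℂ} (hp : ‖p‖ < 1) :
    Tendsto (fun n => ∏ k ∈ Finset.range n, (1 - a * p ^ k)) atTop (𝓝 (qPochInf a p)) :=
  (mult_poch hp).tendsto_prod_tprod_nat

lemma one_sub_ne {z : ℂ} (h : ‖z‖ < 1) : 1 - z ≠ 0 := by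
  intro h0
  have : z = 1 := (sub_eq_zero.mp h0).symm
  simp [this] at h

lemma norm_mul_pow_lt {a p : ℂ} (ha : ‖a‖ < 1) (hp : ‖p‖ < 1) (k : ℕ) : ‖a * p ^ k‖ < 1 := by
  rw [norm_mul, norm_pow]
  calc ‖a‖ * ‖p‖ ^ k ≤ ‖a‖ * 1 := by
        gcongr
        exact pow_le_one₀ (norm_nonneg _) hp.le
    _ < 1 := by simpa

lemma poch_ne {a p : ℂ} (ha : ‖a‖ < 1) (hp : ‖p‖ < 1) : qPochInf a p ≠ 0 := by
  unfold qPochInf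
  have := tprod_one_add_ne_zero_of_summable (f := fun k : ℕ => -(a * p ^ k))
    (fun i => by
      rw [← sub_eq_add_neg]
      exact one_sub_ne (norm_mul_pow_lt ha hp i)) (summ_poch hp)
  simpa [sub_eq_add_neg] using this

lemma poch_neg {a p : ℂ} (hp : ‖p‖ < 1) :
    qPochInf a p * qPochInf (-a) p = qPochInf (a ^ 2) (p ^ 2) := by
  unfold qPochInf
  rw [← (mult_poch hp).tprod_mul (mult_poch hp)]
  congr 1
  ext k
  ring

lemma norm_pow_lt {p : ℂ} (hp : ‖p‖ < 1) {n : ℕ} (hn : n ≠ 0) : ‖p ^ n‖ < 1 := by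
  rw [norm_pow]
  exact pow_lt_one₀ (norm_nonneg _) hp hn

lemma poch_dissect {a p : ℂ} (hp : ‖p‖ < 1) {N : ℕ} (hN : N ≠ 0) :
    qPochInf a p = ∏ j ∈ Finset.range N, qPochInf (a * p ^ j) (p ^ N) := by
  have h1 : Tendsto (fun n => ∏ k ∈ Finset.range (N * n), (1 - a * p ^ k)) atTop
      (𝓝 (qPochInf a p)) :=
    (tendsto_poch hp).comp (tendsto_id.const_mul_atTop' (Nat.pos_of_ne_zero hN))
  have h2 : Tendsto (fun n => ∏ j ∈ Finset.range N, ∏ k ∈ Finset.range n,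
      (1 - (a * p ^ j) * (p ^ N) ^ k)) atTop
      (𝓝 (∏ j ∈ Finset.range N, qPochInf (a * p ^ j) (p ^ N))) :=
    tendsto_finsetProd _ fun j _ => tendsto_poch (norm_pow_lt hp hN)
  refine tendsto_nhds_unique h1 (h2.congr fun n => ?_)
  induction n with
  | zero => simp
  | succ n ih =>
    rw [mul_add, mul_one, Finset.prod_range_add, ← ih, ← Finset.prod_mul_distrib]
    refine Finset.prod_congr rfl fun j _ => ?_
    rw [Finset.prod_range_succ]
    ring

/-! ### Jacobi triple product -/

/-- Finite `(p;p)_n`. -/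
noncomputable def PP (p : ℂ) (n : ℕ) : ℂ := ∏ k ∈ Finset.range n, (1 - p * p ^ k)

/-- `1/(p;p)_m`, extended by zero to negative `m`. -/
noncomputable def gg (p : ℂ) (m : ℤ) : ℂ := if 0 ≤ m then (PP p m.toNat)⁻¹ else 0

lemma PP_ne {p : ℂ} (hp : ‖p‖ < 1) (n : ℕ) : PP p n ≠ 0 :=
  Finset.prod_ne_zero_iff.mpr fun k _ => one_sub_ne (norm_mul_pow_lt hp hp k)

lemma gg_pred {p : ℂ} (hp : ‖p‖ < 1) (m : ℤ) : gg p (m - 1) = (1 - p ^ m) * gg p m := by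
  rcases lt_trichotomy m 0 with h | h | h
  · simp [gg, not_le.mpr h, show ¬ (1 ≤ m) by omega]
  · subst h; simp [gg]
  · obtain ⟨n, rfl⟩ : ∃ n : ℕ, m = n + 1 := ⟨(m - 1).toNat, by omega⟩
    have h1 : gg p ((n : ℤ) + 1 - 1) = (PP p n)⁻¹ := by simp [gg]
    have h2 : gg p ((n : ℤ) + 1) = (PP p (n + 1))⁻¹ := by
      rw [gg, if_pos (by omega)]
      congr 2
    rw [h1, h2]
    have h3 : PP p (n + 1) = PP p n * (1 - p ^ ((n : ℤ) + 1)) := by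
      rw [PP, Finset.prod_range_succ, ← PP]
      congr 2
      norm_cast
      ring
    have := PP_ne hp n
    have := PP_ne hp (n + 1)
    rw [h3] at this ⊢
    have : (1 - p ^ ((n : ℤ) + 1)) ≠ 0 := right_ne_zero_of_mul this
    field_simp

lemma tendsto_PP {p : ℂ} (hp : ‖p‖ < 1) : Tendsto (PP p) atTop (𝓝 (qPochInf p p)) :=
  tendsto_poch hp

lemma gg_bdd {p : ℂ} (hp : ‖p‖ < 1) : ∃ C : ℝ, ∀ m, ‖gg p m‖ ≤ C := by
  have h := ((tendsto_PP hp).inv₀ (poch_ne hp hp)).norm.bddAbove_range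
  obtain ⟨C, hC⟩ := h
  refine ⟨max C 0, fun m => ?_⟩
  unfold gg
  split_ifs
  · exact le_max_of_le_left (hC ⟨_, rfl⟩)
  · simp

lemma gg_tendsto {p : ℂ} (hp : ‖p‖ < 1) : Tendsto (gg p) atTop (𝓝 (qPochInf p p)⁻¹) := by
  have h1 : Tendsto (fun m : ℤ => (PP p m.toNat)⁻¹) atTop (𝓝 (qPochInf p p)⁻¹) :=
    ((tendsto_PP hp).inv₀ (poch_ne hp hp)).comp
      (tendsto_atTop.mpr fun n => (eventually_ge_atTop (n : ℤ)).mono fun m hm => by omega)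
  refine h1.congr' ?_
  filter_upwards [eventually_ge_atTop 0] with m hm
  simp [gg, hm]

lemma tt_succ {a b : ℂ} (ha : a ≠ 0) (hb : b ≠ 0) (j : ℤ) :
    tt a b (j + 1) = a * (a * b) ^ j * tt a b j := by
  have e1 : ((j + 1) * (j + 1 + 1)) / 2 = 1 + j + (j * (j + 1)) / 2 := by
    have h1 := two_T (j + 1)
    have h2 := two_T j
    linarith
  have e2 : ((j + 1) * (j + 1 - 1)) / 2 = j + (j * (j - 1)) / 2 := by
    have h1 := two_T' (j + 1)
    have h2 := two_T' j
    linarith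
  unfold tt
  rw [e1, e2, zpow_add₀ ha, zpow_add₀ hb, zpow_add₀ ha, mul_zpow, zpow_one]
  ring

lemma jtp_finite {a b : ℂ} (ha : a ≠ 0) (hb : b ≠ 0) (ha1 : ‖a‖ < 1) (hb1 : ‖b‖ < 1) (n : ℕ) :
    PP (a * b) (2 * n) * ∑' j : ℤ, gg (a * b) (n + j) * gg (a * b) (n - j) * tt a b j
      = ∏ k ∈ Finset.range n, ((1 - (-a) * (a * b) ^ k) * (1 - (-b) * (a * b) ^ k)) := by
  have hp : ‖a * b‖ < 1 := by simpa using norm_mul_pow_lt ha1 hb1 1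
  have hp0 : a * b ≠ 0 := mul_ne_zero ha hb
  obtain ⟨p, hpdef⟩ : ∃ p, p = a * b := ⟨_, rfl⟩
  rw [← hpdef] at hp hp0 ⊢
  obtain ⟨C, hC⟩ := gg_bdd hp
  have hC0 : 0 ≤ C := (norm_nonneg _).trans (hC 0)
  have hsum : ∀ n : ℕ, Summable (fun j : ℤ => gg p (n + j) * gg p (n - j) * tt a b j) := by
    intro n
    refine Summable.of_norm_bounded ((summable_tt ha1 hb1).mul_left (C * C)) fun j => ?_
    rw [norm_mul, norm_mul]
    gcongr <;> apply hC
  induction n with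
  | zero =>
    rw [tsum_eq_single 0]
    · simp [gg, PP, tt]
    · intro j hj
      rcases lt_or_gt_of_ne hj with h | h
      · simp [gg, not_le.mpr h]
      · simp [gg, not_le.mpr h]
  | succ n ih =>
    rw [Finset.prod_range_succ, ← ih]
    set S := ∑' j : ℤ, gg p (n + j) * gg p (n - j) * tt a b j with hS
    have hs0 := (hsum n).hasSum
    rw [← hS] at hs0
    -- shifted sums
    have hs1 : HasSum (fun j : ℤ => p ^ ((n : ℤ) + 1 - j) *
        (gg p (n + (j - 1)) * gg p (n - (j - 1)) * tt a b j)) (a * p ^ n * S) := by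
      have := ((Equiv.subRight (1 : ℤ)).hasSum_iff.mpr hs0).mul_left (a * p ^ n)
      refine hs_congr ?_ this
      intro j
      have ht := tt_succ ha hb (j - 1)
      rw [sub_add_cancel, ← hpdef] at ht
      have hz : p ^ ((n : ℤ) + 1 - j) * p ^ (j - 1) = p ^ n := by
        rw [← zpow_add₀ hp0, ← zpow_natCast]
        congr 1
        ring
      simp only [Function.comp, Equiv.subRight_apply]
      rw [ht, ← hz]
      ring
    have hs2 : HasSum (fun j : ℤ => p ^ ((n : ℤ) + 1 + j) *
        (gg p (n + (j + 1)) * gg p (n - (j + 1)) * tt a b j)) (b * p ^ n * S) := by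
      have := ((Equiv.addRight (1 : ℤ)).hasSum_iff.mpr hs0).mul_left (b * p ^ n)
      refine hs_congr ?_ this
      intro j
      have ht := tt_succ ha hb j
      rw [← hpdef] at ht
      have hz : p ^ ((n : ℤ) + 1 + j) = a * b * (p ^ n * p ^ j) := by
        rw [← hpdef, zpow_add₀ hp0, zpow_add₀ hp0, zpow_natCast, zpow_one]
        ring
      simp only [Function.comp, Equiv.coe_addRight]
      rw [ht, hz]
      ring
    have hs3 := (((hs0.mul_left (1 + p ^ (2 * n + 1))).add hs1).add hs2).mul_left (PP p (2 * n))
    have hs4 := (hsum (n + 1)).hasSum.mul_left (PP p (2 * (n + 1)))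
    have key := hs4.unique (hs_congr (fun j => ?_) hs3)
    · rw [key]
      have : p ^ (2 * n + 1) = a * b * (p ^ n * p ^ n) := by rw [← hpdef]; ring
      rw [this]
      ring
    · have hA2 : gg p (n + (j - 1)) =
          (1 - p ^ ((n : ℤ) + j)) * ((1 - p ^ ((n : ℤ) + 1 + j)) * gg p (n + 1 + j)) := by
        rw [← gg_pred hp, show (n : ℤ) + 1 + j - 1 = n + j by ring, ← gg_pred hp]
        congr 1; ring
      have hB2 : gg p (n - (j + 1)) =
          (1 - p ^ ((n : ℤ) - j)) * ((1 - p ^ ((n : ℤ) + 1 - j)) * gg p (n + 1 - j)) := by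
        rw [← gg_pred hp, show (n : ℤ) + 1 - j - 1 = n - j by ring, ← gg_pred hp]
        congr 1; ring
      have hA1 : gg p (n + j) = (1 - p ^ ((n : ℤ) + 1 + j)) * gg p (n + 1 + j) := by
        rw [← gg_pred hp]; congr 1; ring
      have hB1 : gg p (n - j) = (1 - p ^ ((n : ℤ) + 1 - j)) * gg p (n + 1 - j) := by
        rw [← gg_pred hp]; congr 1; ring
      have hA0 : gg p (n + (j + 1)) = gg p (n + 1 + j) := by congr 1; ring
      have hB0 : gg p (n - (j - 1)) = gg p (n + 1 - j) := by congr 1; ring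
      have hPP : PP p (2 * (n + 1)) =
          PP p (2 * n) * (1 - p ^ (2 * n + 1)) * (1 - p ^ (2 * n + 2)) := by
        rw [show 2 * (n + 1) = 2 * n + 1 + 1 by ring, PP, Finset.prod_range_succ,
          Finset.prod_range_succ, ← PP]
        ring
      rw [hA2, hB2, hA1, hB1, hA0, hB0, hPP]
      push_cast
      have x1 : p ^ ((n : ℤ) + 1 + j) = p * p ^ n * p ^ j := by
        rw [zpow_add₀ hp0, zpow_add₀ hp0, zpow_natCast, zpow_one]; ring
      have x2 : p ^ ((n : ℤ) + j) = p ^ n * p ^ j := by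
        rw [zpow_add₀ hp0, zpow_natCast]
      have x3 : p ^ ((n : ℤ) + 1 - j) = p * p ^ n * (p ^ j)⁻¹ := by
        rw [zpow_sub₀ hp0, zpow_add₀ hp0, zpow_natCast, zpow_one]; ring
      have x4 : p ^ ((n : ℤ) - j) = p ^ n * (p ^ j)⁻¹ := by
        rw [zpow_sub₀ hp0, zpow_natCast]; ring
      have x5 : p ^ (2 * n + 1) = p * (p ^ n) ^ 2 := by ring
      have x6 : p ^ (2 * n + 2) = p ^ 2 * (p ^ n) ^ 2 := by ring
      rw [x1, x2, x3, x4, x5, x6]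
      have hw : p ^ j ≠ 0 := zpow_ne_zero _ hp0
      generalize p ^ j = w at hw ⊢
      generalize p ^ n = v
      field_simp
      ring

theorem jtp {a b : ℂ} (ha : a ≠ 0) (hb : b ≠ 0) (ha1 : ‖a‖ < 1) (hb1 : ‖b‖ < 1) :
    ramTheta a b = qPochInf (-a) (a * b) * qPochInf (-b) (a * b) * qPochInf (a * b) (a * b) := by
  have hp : ‖a * b‖ < 1 := by simpa using norm_mul_pow_lt ha1 hb1 1
  have hfin := jtp_finite ha hb ha1 hb1
  generalize a * b = p at *
  obtain ⟨C, hC⟩ := gg_bdd hp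
  have hC0 : 0 ≤ C := (norm_nonneg _).trans (hC 0)
  have h1 : Tendsto (fun n : ℕ => ∑' j : ℤ, gg p (n + j) * gg p (n - j) * tt a b j) atTop
      (𝓝 (∑' j : ℤ, (qPochInf p p)⁻¹ * (qPochInf p p)⁻¹ * tt a b j)) := by
    refine tendsto_tsum_of_dominated_convergence ((summable_tt ha1 hb1).mul_left (C * C)) ?_ ?_
    · intro j
      refine Tendsto.mul_const _ (Tendsto.mul ?_ ?_)
      · exact (gg_tendsto hp).comp
          (tendsto_atTop_add_const_right _ _ tendsto_natCast_atTop_atTop)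
      · exact (gg_tendsto hp).comp
          (tendsto_atTop_add_const_right _ (-j) tendsto_natCast_atTop_atTop)
    · refine Eventually.of_forall fun n j => ?_
      rw [norm_mul, norm_mul]
      gcongr <;> apply hC
  have h2 : Tendsto (fun n : ℕ => PP p (2 * n)) atTop (𝓝 (qPochInf p p)) :=
    (tendsto_PP hp).comp (tendsto_id.const_mul_atTop' (by norm_num))
  have h3 := h2.mul h1
  have h4 := (tendsto_poch (a := -a) hp).mul (tendsto_poch (a := -b) hp)
  have h5 := tendsto_nhds_unique h3 (h4.congr fun n => by
    rw [hfin, Finset.prod_mul_distrib])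
  rw [tsum_mul_left, ← ramTheta_eq] at h5
  have hne := poch_ne hp hp
  rw [← h5]
  field_simp

/-! ### Rearranging double sums -/

lemma tsum_fin_prod {N : ℕ} {α β : Type*} (e : Fin N × β ≃ α) {F : α → ℂ} (hF : Summable F) :
    ∑' x, F x = ∑ c : Fin N, ∑' y, F (e (c, y)) := by
  rw [← e.tsum_eq F, Summable.tsum_prod (f := fun z => F (e z)) (e.summable_iff.mpr hF),
    tsum_fintype]

/-- Parity splitting of the integers. -/
def eqv1 : Fin 2 × ℤ ≃ ℤ where
  toFun x := 2 * x.2 + (x.1 : ℕ)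
  invFun n := (⟨(n % 2).toNat, by omega⟩, n / 2)
  left_inv := by
    rintro ⟨⟨c, hc⟩, k⟩
    ext
    · simp only; omega
    · simp only; omega
  right_inv := by
    intro n
    simp only; omega

/-- Splitting pairs of integers by parity of the sum. -/
def eqv2 : Fin 2 × (ℤ × ℤ) ≃ ℤ × ℤ where
  toFun x := (x.2.1 + x.2.2 + (x.1 : ℕ), x.2.1 - x.2.2)
  invFun y := (⟨((y.1 + y.2) % 2).toNat, by omega⟩, ((y.1 + y.2) / 2, (y.1 + y.2) / 2 - y.2))
  left_inv := by
    rintro ⟨⟨c, hc⟩, i, j⟩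
    ext
    · simp only; omega
    · simp only; omega
    · simp only; omega
  right_inv := by
    rintro ⟨m, n⟩
    ext
    · simp only; omega
    · simp only; omega

/-- Splitting pairs of integers by `m + 2 n` modulo 5. -/
def eqv5 : Fin 5 × (ℤ × ℤ) ≃ ℤ × ℤ where
  toFun x := (x.2.1 - 2 * x.2.2 + (x.1 : ℕ), 2 * x.2.1 + x.2.2)
  invFun y := (⟨((y.1 + 2 * y.2) % 5).toNat, by omega⟩,
    ((y.1 + 2 * y.2) / 5, y.2 - 2 * ((y.1 + 2 * y.2) / 5)))
  left_inv := by
    rintro ⟨⟨c, hc⟩, i, j⟩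
    ext
    · simp only; omega
    · simp only; omega
    · simp only; omega
  right_inv := by
    rintro ⟨m, n⟩
    ext
    · simp only; omega
    · simp only; omega

lemma tsum_parity {F : ℤ → ℂ} (hF : Summable F) :
    ∑' n, F n = ∑' k, F (2 * k) + ∑' k, F (2 * k + 1) := by
  rw [tsum_fin_prod eqv1 hF, Fin.sum_univ_two]
  simp [eqv1]

lemma prod_reindex {F G : ℤ → ℂ} (hF : Summable (fun n => ‖F n‖)) (hG : Summable (fun n => ‖G n‖))
    (e₁ e₂ : ℤ ≃ ℤ) :
    ∑' y : ℤ × ℤ, F (e₁ y.1) * G (e₂ y.2) = (∑' n, F n) * ∑' n, G n := by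
  rw [tsum_mul_tsum_of_summable_norm hF hG]
  exact (Equiv.prodCongr e₁ e₂).tsum_eq (fun z : ℤ × ℤ => F z.1 * G z.2)

lemma tt_neg (a b : ℂ) (n : ℤ) : tt a b (-n) = tt b a n := by
  unfold tt
  rw [show -n * (-n + 1) = n * (n - 1) by ring, show -n * (-n - 1) = n * (n + 1) by ring, mul_comm]

lemma tt_twist {a b l : ℂ} (hl : l ≠ 0) (n : ℤ) : tt (a * l) b n = l ^ n * tt a (b * l) n := by
  have e : (n * (n + 1)) / 2 = n + (n * (n - 1)) / 2 := by
    have h1 := two_T n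
    have h2 := two_T' n
    linarith
  have e2 : l ^ ((n * (n + 1)) / 2) = l ^ n * l ^ ((n * (n - 1)) / 2) := by
    rw [e, zpow_add₀ hl]
  unfold tt
  rw [mul_zpow, mul_zpow, e2]
  ring

lemma tt_add_sub {a b c d : ℂ} (ha : a ≠ 0) (hb : b ≠ 0) (hc : c ≠ 0) (hd : d ≠ 0)
    (h : a * b = c * d) (i j : ℤ) :
    tt a b (i + j) * tt c d (i - j) = tt (a * c) (b * d) i * tt (a * d) (b * c) j := by
  have t1 := two_T i
  have t2 := two_T j
  have t3 := two_T' i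
  have t4 := two_T' j
  have e1 : ((i + j) * (i + j + 1)) / 2 = (i * (i + 1)) / 2 + (j * (j + 1)) / 2 + i * j := by
    have := two_T (i + j)
    linarith
  have e2 : ((i + j) * (i + j - 1)) / 2 = (i * (i - 1)) / 2 + (j * (j - 1)) / 2 + i * j := by
    have := two_T' (i + j)
    linarith
  have e3 : ((i - j) * (i - j + 1)) / 2 = (i * (i + 1)) / 2 + (j * (j - 1)) / 2 - i * j := by
    have := two_T (i - j)
    linarith
  have e4 : ((i - j) * (i - j - 1)) / 2 = (i * (i - 1)) / 2 + (j * (j + 1)) / 2 - i * j := by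
    have := two_T' (i - j)
    linarith
  have hz : a ^ (i * j) * b ^ (i * j) = c ^ (i * j) * d ^ (i * j) := by
    rw [← mul_zpow, ← mul_zpow, h]
  have hc' : c ^ (i * j) ≠ 0 := zpow_ne_zero _ hc
  have hd' : d ^ (i * j) ≠ 0 := zpow_ne_zero _ hd
  unfold tt
  rw [e1, e2, e3, e4, zpow_add₀ ha, zpow_add₀ ha, zpow_add₀ hb, zpow_add₀ hb, zpow_sub₀ hc,
    zpow_add₀ hc, zpow_sub₀ hd, zpow_add₀ hd, mul_zpow, mul_zpow, mul_zpow, mul_zpow]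
  generalize (i * (i + 1)) / 2 = T1
  generalize (j * (j + 1)) / 2 = T2
  generalize (i * (i - 1)) / 2 = T3
  generalize (j * (j - 1)) / 2 = T4
  rw [show a ^ T1 * a ^ T2 * a ^ (i * j) * (b ^ T3 * b ^ T4 * b ^ (i * j)) *
    (c ^ T1 * c ^ T4 / c ^ (i * j) * (d ^ T3 * d ^ T2 / d ^ (i * j))) =
    (a ^ T1 * a ^ T2 * b ^ T3 * b ^ T4 * c ^ T1 * c ^ T4 * d ^ T3 * d ^ T2) *
    ((a ^ (i * j) * b ^ (i * j)) * (c ^ (i * j) * d ^ (i * j))⁻¹) by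
      rw [mul_inv]; ring, hz, mul_inv_cancel₀ (mul_ne_zero hc' hd')]
  ring

lemma norm_mul_lt {a b : ℂ} (ha : ‖a‖ < 1) (hb : ‖b‖ < 1) : ‖a * b‖ < 1 := by
  simpa using norm_mul_pow_lt ha hb 1

/-- Product of two theta functions (Ramanujan's Entry 29, added form). -/
lemma theta_mul {a b c d e h A B C D E H : ℂ} (ha : a ≠ 0) (hb : b ≠ 0) (hc : c ≠ 0) (hd : d ≠ 0)
    (ha1 : ‖a‖ < 1) (hb1 : ‖b‖ < 1) (hc1 : ‖c‖ < 1) (hd1 : ‖d‖ < 1) (he1 : ‖e‖ < 1) (hh1 : ‖h‖ < 1)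
    (habcd : a * b = c * d) (he : b = c * e) (hh : b = d * h)
    (hA : A = a * c) (hB : B = b * d) (hC : C = a * d) (hD : D = b * c)
    (hE : E = a * c ^ 2 * d) (hH : H = a * c * d ^ 2) :
    ramTheta a b * ramTheta c d
      = ramTheta A B * ramTheta C D + a * (ramTheta e E * ramTheta h H) := by
  have hE1 : ‖E‖ < 1 := by
    rw [hE, sq, show a * (c * c) * d = (a * c) * (c * d) by ring]
    exact norm_mul_lt (norm_mul_lt ha1 hc1) (norm_mul_lt hc1 hd1)
  have hH1 : ‖H‖ < 1 := by
    rw [hH, sq, show a * c * (d * d) = (a * c) * (d * d) by ring]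
    exact norm_mul_lt (norm_mul_lt ha1 hc1) (norm_mul_lt hd1 hd1)
  have hA1 : ‖A‖ < 1 := hA ▸ norm_mul_lt ha1 hc1
  have hB1 : ‖B‖ < 1 := hB ▸ norm_mul_lt hb1 hd1
  have hC1 : ‖C‖ < 1 := hC ▸ norm_mul_lt ha1 hd1
  have hD1 : ‖D‖ < 1 := hD ▸ norm_mul_lt hb1 hc1
  simp only [ramTheta_eq]
  rw [tsum_mul_tsum_of_summable_norm (summable_tt ha1 hb1) (summable_tt hc1 hd1),
    tsum_fin_prod eqv2 (summable_mul_of_summable_norm (summable_tt ha1 hb1) (summable_tt hc1 hd1)),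
    Fin.sum_univ_two, ← prod_reindex (summable_tt hA1 hB1) (summable_tt hC1 hD1)
      (Equiv.refl ℤ) (Equiv.refl ℤ),
    ← prod_reindex (summable_tt he1 hE1) (summable_tt hh1 hH1) (Equiv.neg ℤ) (Equiv.neg ℤ),
    ← tsum_mul_left]
  congr 1
  · refine tsum_congr fun y => ?_
    simp only [eqv2, Equiv.coe_fn_mk, Equiv.refl_apply, Fin.val_zero, Nat.cast_zero, add_zero]
    rw [tt_add_sub ha hb hc hd habcd, hA, hB, hC, hD]
  · refine tsum_congr fun y => ?_
    simp only [eqv2, Equiv.coe_fn_mk, Equiv.neg_apply, Fin.val_one, Nat.cast_one]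
    have hl : a * b ≠ 0 := mul_ne_zero ha hb
    rw [tt_succ ha hb, mul_assoc, tt_add_sub ha hb hc hd habcd, tt_neg, tt_neg]
    have hE' : E = (a * c) * (a * b) := by rw [hE, habcd]; ring
    have hH' : H = (a * d) * (a * b) := by rw [hH, habcd]; ring
    have hBe : e * (a * b) = b * d := by rw [habcd]; linear_combination (-d) * he
    have hDh : h * (a * b) = b * c := by rw [habcd]; linear_combination (-c) * hh
    rw [hE', hH', tt_twist hl, tt_twist hl, hBe, hDh, zpow_add₀ hl]
    ring

lemma tt_double {a b : ℂ} (ha : a ≠ 0) (hb : b ≠ 0) (k : ℤ) :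
    tt a b (2 * k) = tt (a ^ 3 * b) (a * b ^ 3) k := by
  have t1 := two_T k
  have t2 := two_T' k
  have e1 : ((2 * k) * (2 * k + 1)) / 2 =
      (k * (k + 1)) / 2 * 3 + (k * (k - 1)) / 2 := by
    have := two_T (2 * k)
    linarith
  have e2 : ((2 * k) * (2 * k - 1)) / 2 = (k * (k + 1)) / 2 + (k * (k - 1)) / 2 * 3 := by
    have := two_T' (2 * k)
    linarith
  unfold tt
  rw [e1, e2, zpow_add₀ ha, zpow_add₀ hb, zpow_mul, zpow_mul, mul_zpow, mul_zpow]
  simp only [← zpow_natCast, ← zpow_mul]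
  push_cast
  rw [mul_comm (3 : ℤ) ((k * (k + 1)) / 2), mul_comm (3 : ℤ) ((k * (k - 1)) / 2)]
  ring

/-- Even/odd dissection of a theta function. -/
lemma theta_dissect {a b e A B E : ℂ} (ha : a ≠ 0) (hb : b ≠ 0) (ha1 : ‖a‖ < 1) (hb1 : ‖b‖ < 1)
    (he : b = a * e) (hA : A = a ^ 3 * b) (hB : B = a * b ^ 3) (hE : E = a ^ 5 * b ^ 3) :
    ramTheta a b = ramTheta A B + a * ramTheta e E := by
  simp only [ramTheta_eq]
  rw [tsum_parity (summable_tt ha1 hb1).of_norm]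
  congr 1
  · refine tsum_congr fun k => ?_
    rw [tt_double ha hb, hA, hB]
  · rw [← tsum_mul_left, ← (Equiv.neg ℤ).tsum_eq (fun n => a * tt e E n)]
    refine tsum_congr fun k => ?_
    have hl : (a * b) ^ 2 ≠ 0 := pow_ne_zero _ (mul_ne_zero ha hb)
    have hE' : E = (a ^ 3 * b) * (a * b) ^ 2 := by rw [hE]; ring
    have hBe : e * (a * b) ^ 2 = a * b ^ 3 := by linear_combination (-a * b ^ 2) * he
    rw [Equiv.neg_apply, tt_neg, tt_succ ha hb, tt_double ha hb, hE', tt_twist hl, hBe,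
      zpow_mul, mul_assoc]
    norm_cast

/-! ### The identity `ψ(x)² - x ψ(x⁵)² = f(x,x⁴) f(x²,x³)` -/

lemma tt_pow {x : ℂ} (hx : x ≠ 0) (s t : ℕ) (n : ℤ) {N : ℤ}
    (hN : 2 * N = s * (n * (n + 1)) + t * (n * (n - 1))) : tt (x ^ s) (x ^ t) n = x ^ N := by
  unfold tt
  rw [← zpow_natCast, ← zpow_natCast, ← zpow_mul, ← zpow_mul, ← zpow_add₀ hx]
  congr 1
  have t1 := two_T n
  have t2 := two_T' n
  rw [← t1, ← t2] at hN
  linarith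

lemma psi_sq_sub {x : ℂ} (hx : x ≠ 0) (hx1 : ‖x‖ < 1) :
    psi x ^ 2 - x * psi (x ^ 5) ^ 2 = ramTheta x (x ^ 4) * ramTheta (x ^ 2) (x ^ 3) := by
  have hn : ∀ n : ℕ, n ≠ 0 → ‖x ^ n‖ < 1 := fun n h => norm_pow_lt hx1 h
  have s1 : Summable (fun n => ‖tt x (x ^ 3) n‖) := summable_tt hx1 (hn 3 (by norm_num))
  have s5 : Summable (fun n => ‖tt (x ^ 5) (x ^ 15) n‖) :=
    summable_tt (hn 5 (by norm_num)) (hn 15 (by norm_num))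
  have sA : Summable (fun n => ‖tt x (x ^ 4) n‖) := summable_tt hx1 (hn 4 (by norm_num))
  have sB : Summable (fun n => ‖tt (x ^ 2) (x ^ 3) n‖) :=
    summable_tt (hn 2 (by norm_num)) (hn 3 (by norm_num))
  have i0 : Function.Injective (fun k : ℤ => 2 * k) := fun a b h => by simp at h; omega
  have i1 : Function.Injective (fun k : ℤ => 2 * k + 1) := fun a b h => by simp at h; omega
  have f1 : ∀ n, tt x (x ^ 3) n = x ^ (2 * n ^ 2 - n) := fun n => by
    have := tt_pow hx 1 3 n (N := 2 * n ^ 2 - n) (by push_cast; ring)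
    rwa [pow_one] at this
  have f5 : ∀ n, tt (x ^ 5) (x ^ 15) n = x ^ (10 * n ^ 2 - 5 * n) := fun n =>
    tt_pow hx 5 15 n (by push_cast; ring)
  have fAe : ∀ n, tt x (x ^ 4) (2 * n) = x ^ (10 * n ^ 2 - 3 * n) := fun n => by
    have := tt_pow hx 1 4 (2 * n) (N := 10 * n ^ 2 - 3 * n) (by push_cast; ring)
    rwa [pow_one] at this
  have fAo : ∀ n, tt x (x ^ 4) (2 * n + 1) = x ^ (10 * n ^ 2 + 7 * n + 1) := fun n => by
    have := tt_pow hx 1 4 (2 * n + 1) (N := 10 * n ^ 2 + 7 * n + 1) (by push_cast; ring)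
    rwa [pow_one] at this
  have fBe : ∀ n, tt (x ^ 2) (x ^ 3) (2 * n) = x ^ (10 * n ^ 2 - n) := fun n =>
    tt_pow hx 2 3 (2 * n) (by push_cast; ring)
  have fBo : ∀ n, tt (x ^ 2) (x ^ 3) (2 * n + 1) = x ^ (10 * n ^ 2 + 9 * n + 2) := fun n =>
    tt_pow hx 2 3 (2 * n + 1) (by push_cast; ring)
  have sAe := sA.comp_injective i0
  have sAo := sA.comp_injective i1
  have sBe := sB.comp_injective i0
  have sBo := sB.comp_injective i1
  simp only [Function.comp_def, fAe] at sAe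
  simp only [Function.comp_def, fAo] at sAo
  simp only [Function.comp_def, fBe] at sBe
  simp only [Function.comp_def, fBo] at sBo
  have hA : ramTheta x (x ^ 4) =
      ∑' n : ℤ, x ^ (10 * n ^ 2 - 3 * n) + ∑' n : ℤ, x ^ (10 * n ^ 2 + 7 * n + 1) := by
    rw [ramTheta_eq, tsum_parity sA.of_norm]
    simp only [fAe, fAo]
  have hB : ramTheta (x ^ 2) (x ^ 3) =
      ∑' n : ℤ, x ^ (10 * n ^ 2 - n) + ∑' n : ℤ, x ^ (10 * n ^ 2 + 9 * n + 2) := by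
    rw [ramTheta_eq, tsum_parity sB.of_norm]
    simp only [fBe, fBo]
  have h5 : psi (x ^ 5) = ∑' n : ℤ, x ^ (10 * n ^ 2 - 5 * n) := by
    rw [psi, ← pow_mul, ramTheta_eq]
    simp only [f5]
  have h1 : psi x = ∑' n : ℤ, x ^ (2 * n ^ 2 - n) := by
    rw [psi, ramTheta_eq]
    simp only [f1]
  simp only [f1] at s1
  simp only [f5] at s5
  rw [hA, hB, h5, h1, sq, tsum_mul_tsum_of_summable_norm s1 s1,
    tsum_fin_prod eqv5 (summable_mul_of_summable_norm s1 s1), Fin.sum_univ_five]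
  have c0 := prod_reindex sAe sBe (Equiv.refl ℤ) (Equiv.neg ℤ)
  have c1 := prod_reindex sBe sAo (Equiv.neg ℤ) (Equiv.neg ℤ)
  have c2 := prod_reindex s5 s5 (Equiv.neg ℤ) (Equiv.subLeft 1)
  have c3 := prod_reindex sBo sAe (Equiv.refl ℤ) (Equiv.subRight 1)
  have c4 := prod_reindex sAo sBo (Equiv.subLeft (-1)) (Equiv.subRight 2)
  simp only [Equiv.refl_apply, Equiv.neg_apply, Equiv.subLeft_apply, Equiv.subRight_apply,
    ← zpow_add₀ hx] at c0 c1 c2 c3 c4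
  simp only [eqv5, Equiv.coe_fn_mk, ← zpow_add₀ hx]
  have d2 : x * ((∑' n : ℤ, x ^ (10 * n ^ 2 - 5 * n)) * (∑' n : ℤ, x ^ (10 * n ^ 2 - 5 * n))) =
      ∑' y : ℤ × ℤ, x ^ (1 + (10 * (-y.1) ^ 2 - 5 * (-y.1) +
        (10 * (1 - y.2) ^ 2 - 5 * (1 - y.2)))) := by
    rw [← c2, ← tsum_mul_left]
    refine tsum_congr fun y => ?_
    rw [zpow_add₀ hx 1, zpow_one]
  rw [sq, d2, add_mul, mul_add, mul_add, ← c0, ← c4, mul_comm _ (∑' n : ℤ, x ^ (10 * n ^ 2 - n)),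
    mul_comm _ (∑' n : ℤ, x ^ (10 * n ^ 2 + 9 * n + 2)), ← c1, ← c3]
  have r : ∀ p q r s t p' q' r' s' t' : ℂ, p = p' → q = q' → r = r' → s = s' → t = t' →
      p + q + r + s + t - r' = p' + s' + (q' + t') := by
    intros; subst_vars; ring
  apply r <;>
  · refine tsum_congr fun y => ?_
    congr 1
    simp
    ring

/-! ### Assembling the proof -/

lemma psi_prod {y : ℂ} (hy : y ≠ 0) (hy1 : ‖y‖ < 1) :
    psi y = qPochInf (-y) (y ^ 2) * qPochInf (y ^ 4) (y ^ 4) := by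
  rw [psi, jtp hy (pow_ne_zero 3 hy) hy1 (norm_pow_lt hy1 (by norm_num)),
    poch_dissect (a := -y) (p := y ^ 2) (N := 2) (norm_pow_lt hy1 (by norm_num)) (by norm_num)]
  simp only [Finset.prod_range_succ, Finset.prod_range_zero, pow_zero, mul_one, one_mul, pow_one]
  rw [show y * y ^ 3 = y ^ 4 by ring, show (y ^ 2) ^ 2 = y ^ 4 by ring,
    show -y * y ^ 2 = -y ^ 3 by ring]

lemma phi_prod {y : ℂ} (hy : y ≠ 0) (hy1 : ‖y‖ < 1) :
    phi y = qPochInf (-y) (y ^ 2) ^ 2 * qPochInf (y ^ 2) (y ^ 2) := by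
  rw [phi, jtp hy hy hy1 hy1]
  ring_nf

lemma poch_euler {p : ℂ} (hp : ‖p‖ < 1) : qPochInf (-p) p * qPochInf p (p ^ 2) = 1 := by
  have h1 := poch_neg (a := p) hp
  have h2 := poch_dissect (a := p) (N := 2) hp (by norm_num)
  simp only [Finset.prod_range_succ, Finset.prod_range_zero, pow_zero, mul_one, one_mul,
    pow_one] at h2
  have h3 := poch_ne hp hp
  rw [← sq] at h2
  apply mul_left_cancel₀ h3
  linear_combination (qPochInf p (p ^ 2)) * h1 - h2

lemma omega_prod {x : ℂ} (hx : x ≠ 0) (hx1 : ‖x‖ < 1) :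
    ramTheta (x ^ 2) (x ^ 8) * ramTheta (x ^ 4) (x ^ 6) * (phi (-x) * psi (x ^ 5)) =
      phi (-x ^ 10) * psi (-x) * (ramTheta (-x) (-x ^ 9) * ramTheta (-x ^ 3) (-x ^ 7)) := by
  have n0 : ∀ n : ℕ, x ^ n ≠ 0 := fun n => pow_ne_zero n hx
  have m0 : ∀ n : ℕ, -x ^ n ≠ 0 := fun n => neg_ne_zero.mpr (n0 n)
  have n1 : ∀ n : ℕ, n ≠ 0 → ‖x ^ n‖ < 1 := fun n h => norm_pow_lt hx1 h
  have m1 : ∀ n : ℕ, n ≠ 0 → ‖-x ^ n‖ < 1 := fun n h => by rw [norm_neg]; exact n1 n h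
  have hm0 : -x ≠ 0 := neg_ne_zero.mpr hx
  have hm1 : ‖-x‖ < 1 := by rwa [norm_neg]
  have j1 := jtp (n0 2) (n0 8) (n1 2 (by norm_num)) (n1 8 (by norm_num))
  have j2 := jtp (n0 4) (n0 6) (n1 4 (by norm_num)) (n1 6 (by norm_num))
  have j3 := jtp hm0 (m0 9) hm1 (m1 9 (by norm_num))
  have j4 := jtp (m0 3) (m0 7) (m1 3 (by norm_num)) (m1 7 (by norm_num))
  have j5 := phi_prod hm0 hm1
  have j6 := psi_prod (n0 5) (n1 5 (by norm_num))
  have j7 := phi_prod (m0 10) (m1 10 (by norm_num))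
  have j8 := psi_prod hm0 hm1
  have k1 := poch_dissect (a := -x ^ 2) (p := x ^ 2) (N := 5) (n1 2 (by norm_num)) (by norm_num)
  have k2 := poch_dissect (a := x) (p := x ^ 2) (N := 5) (n1 2 (by norm_num)) (by norm_num)
  have k3 := poch_neg (a := x ^ 2) (n1 2 (by norm_num))
  have k4 := poch_neg (a := x ^ 5) (n1 10 (by norm_num))
  have k5 := poch_euler (n1 10 (by norm_num))
  have l1 : qPochInf (-x ^ 10) (x ^ 10) ≠ 0 := poch_ne (m1 10 (by norm_num)) (n1 10 (by norm_num))
  have l2 : qPochInf (x ^ 5) (x ^ 10) ≠ 0 := poch_ne (n1 5 (by norm_num)) (n1 10 (by norm_num))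
  simp only [Finset.prod_range_succ, Finset.prod_range_zero] at k1 k2
  ring_nf at j1 j2 j3 j4 j5 j6 j7 j8 k1 k2 k3 k4 k5 l1 l2 ⊢
  have g1 : ramTheta (x ^ 2) (x ^ 8) * ramTheta (x ^ 4) (x ^ 6) * qPochInf (-x ^ 10) (x ^ 10) =
      qPochInf (-x ^ 2) (x ^ 2) * qPochInf (x ^ 10) (x ^ 10) ^ 2 := by
    rw [j1, j2, k1]; ring
  have g2 : ramTheta (-x) (-x ^ 9) * ramTheta (-x ^ 3) (-x ^ 7) * qPochInf (x ^ 5) (x ^ 10) =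
      qPochInf x (x ^ 2) * qPochInf (x ^ 10) (x ^ 10) ^ 2 := by
    rw [j3, j4, k2]; ring
  clear j1 j2 j3 j4 k1 k2
  apply mul_right_cancel₀ (mul_ne_zero l1 l2)
  rw [j5, j6, j7, j8]
  generalize qPochInf (-x ^ 10) (x ^ 10) = U at *
  generalize qPochInf (x ^ 5) (x ^ 10) = V at *
  generalize qPochInf (-x ^ 5) (x ^ 10) = W at *
  generalize qPochInf (x ^ 10) (x ^ 20) = Z at *
  generalize qPochInf x (x ^ 2) = K at *
  generalize qPochInf (x ^ 2) (x ^ 2) = L at *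
  generalize qPochInf (-x ^ 2) (x ^ 2) = M at *
  generalize qPochInf (x ^ 4) (x ^ 4) = F at *
  generalize qPochInf (x ^ 20) (x ^ 20) = F' at *
  generalize qPochInf (x ^ 10) (x ^ 10) = p at *
  linear_combination (K ^ 2 * L * W * F' * V) * g1 - (F' * Z ^ 2 * K * F * U) * g2
    + p ^ 2 * K ^ 2 * F' * (W * V * k3 + F * k4 - F * Z * k5)

lemma omega_mul1 {x : ℂ} (hx : x ≠ 0) (hx1 : ‖x‖ < 1) :
    ramTheta (-x) (-x ^ 9) * ramTheta (x ^ 4) (x ^ 6) =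
      psi (-x ^ 5) * ramTheta (-x) (x ^ 4) := by
  have n0 : ∀ n : ℕ, x ^ n ≠ 0 := fun n => pow_ne_zero n hx
  have m0 : ∀ n : ℕ, -x ^ n ≠ 0 := fun n => neg_ne_zero.mpr (n0 n)
  have n1 : ∀ n : ℕ, n ≠ 0 → ‖x ^ n‖ < 1 := fun n h => norm_pow_lt hx1 h
  have m1 : ∀ n : ℕ, n ≠ 0 → ‖-x ^ n‖ < 1 := fun n h => by rw [norm_neg]; exact n1 n h
  have hm0 : -x ≠ 0 := neg_ne_zero.mpr hx
  have hm1 : ‖-x‖ < 1 := by rwa [norm_neg]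
  rw [theta_mul (e := -x ^ 5) (h := -x ^ 3) (A := -x ^ 5) (B := -x ^ 15) (C := -x ^ 7)
      (D := -x ^ 13) (E := -x ^ 15) (H := -x ^ 17) hm0 (m0 9) (n0 4) (n0 6) hm1
      (m1 9 (by norm_num)) (n1 4 (by norm_num)) (n1 6 (by norm_num)) (m1 5 (by norm_num))
      (m1 3 (by norm_num)) (by ring) (by ring) (by ring) (by ring) (by ring) (by ring) (by ring)
      (by ring) (by ring),
    theta_dissect (a := -x) (b := x ^ 4) (e := -x ^ 3) (A := -x ^ 7) (B := -x ^ 13) (E := -x ^ 17)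
      hm0 (n0 4) hm1 (n1 4 (by norm_num)) (by ring) (by ring) (by ring) (by ring), psi,
    show (-x ^ 5) ^ 3 = -x ^ 15 by ring]
  ring

lemma omega_mul2 {x : ℂ} (hx : x ≠ 0) (hx1 : ‖x‖ < 1) :
    ramTheta (x ^ 2) (x ^ 8) * ramTheta (-x ^ 3) (-x ^ 7) =
      psi (-x ^ 5) * ramTheta (x ^ 2) (-x ^ 3) := by
  have n0 : ∀ n : ℕ, x ^ n ≠ 0 := fun n => pow_ne_zero n hx
  have m0 : ∀ n : ℕ, -x ^ n ≠ 0 := fun n => neg_ne_zero.mpr (n0 n)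
  have n1 : ∀ n : ℕ, n ≠ 0 → ‖x ^ n‖ < 1 := fun n h => norm_pow_lt hx1 h
  have m1 : ∀ n : ℕ, n ≠ 0 → ‖-x ^ n‖ < 1 := fun n h => by rw [norm_neg]; exact n1 n h
  have hm1 : ‖-x‖ < 1 := by rwa [norm_neg]
  rw [theta_mul (e := -x ^ 5) (h := -x) (A := -x ^ 5) (B := -x ^ 15) (C := -x ^ 9)
      (D := -x ^ 11) (E := -x ^ 15) (H := -x ^ 19) (n0 2) (n0 8) (m0 3) (m0 7)
      (n1 2 (by norm_num)) (n1 8 (by norm_num)) (m1 3 (by norm_num)) (m1 7 (by norm_num))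
      (m1 5 (by norm_num)) hm1 (by ring) (by ring) (by ring) (by ring) (by ring) (by ring)
      (by ring) (by ring) (by ring),
    theta_dissect (a := x ^ 2) (b := -x ^ 3) (e := -x) (A := -x ^ 9) (B := -x ^ 11) (E := -x ^ 19)
      (n0 2) (m0 3) (n1 2 (by norm_num)) (m1 3 (by norm_num)) (by ring) (by ring) (by ring)
      (by ring), psi, show (-x ^ 5) ^ 3 = -x ^ 15 by ring]
  ring

lemma omega_mul3 {x : ℂ} (hx : x ≠ 0) (hx1 : ‖x‖ < 1) :
    ramTheta (-x) (x ^ 4) * ramTheta (x ^ 2) (-x ^ 3) =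
      ramTheta (-x ^ 3) (-x ^ 7) * ramTheta (x ^ 4) (x ^ 6) +
        -x * (ramTheta (x ^ 2) (x ^ 8) * ramTheta (-x) (-x ^ 9)) := by
  have n0 : ∀ n : ℕ, x ^ n ≠ 0 := fun n => pow_ne_zero n hx
  have m0 : ∀ n : ℕ, -x ^ n ≠ 0 := fun n => neg_ne_zero.mpr (n0 n)
  have n1 : ∀ n : ℕ, n ≠ 0 → ‖x ^ n‖ < 1 := fun n h => norm_pow_lt hx1 h
  have m1 : ∀ n : ℕ, n ≠ 0 → ‖-x ^ n‖ < 1 := fun n h => by rw [norm_neg]; exact n1 n h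
  have hm0 : -x ≠ 0 := neg_ne_zero.mpr hx
  have hm1 : ‖-x‖ < 1 := by rwa [norm_neg]
  exact theta_mul hm0 (n0 4) (n0 2) (m0 3) hm1 (n1 4 (by norm_num)) (n1 2 (by norm_num))
    (m1 3 (by norm_num)) (n1 2 (by norm_num)) hm1 (by ring) (by ring) (by ring) (by ring)
    (by ring) (by ring) (by ring) (by ring) (by ring)

lemma theta_ne {a b : ℂ} (ha : a ≠ 0) (hb : b ≠ 0) (ha1 : ‖a‖ < 1) (hb1 : ‖b‖ < 1) :
    ramTheta a b ≠ 0 := by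
  have hp := norm_mul_lt ha1 hb1
  rw [jtp ha hb ha1 hb1]
  exact mul_ne_zero (mul_ne_zero (poch_ne (by rwa [norm_neg]) hp) (poch_ne (by rwa [norm_neg]) hp))
    (poch_ne hp hp)

theorem stmt12 (q : ℝ) (hq0 : 0 < q) (hq1 : q < 1) :
    Omega1 q ^ 2 + Omega2 q ^ 2
      = psi ((q : ℂ) ^ 2) ^ 4 / psi (-(q : ℂ) ^ 5) ^ 4
        + (q : ℂ) ^ 4 * psi ((q : ℂ) ^ 10) ^ 4 / psi (-(q : ℂ) ^ 5) ^ 4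
        - 2 * (q : ℂ) ^ 2 * psi ((q : ℂ) ^ 2) ^ 2 * psi ((q : ℂ) ^ 10) ^ 2
            / psi (-(q : ℂ) ^ 5) ^ 4
        + 2 * (q : ℂ) * phi (-(q : ℂ) ^ 10) * psi (-(q : ℂ))
            / (phi (-(q : ℂ)) * psi ((q : ℂ) ^ 5)) := by 
  have hx : (q : ℂ) ≠ 0 := by exact_mod_cast hq0.ne'
  have hx1 : ‖(q : ℂ)‖ < 1 := by
    rw [Complex.norm_real, Real.norm_eq_abs, abs_of_pos hq0]
    exact hq1
  unfold Omega1 Omega2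
  generalize (q : ℂ) = x at hx hx1 ⊢
  have n0 : ∀ n : ℕ, x ^ n ≠ 0 := fun n => pow_ne_zero n hx
  have m0 : ∀ n : ℕ, -x ^ n ≠ 0 := fun n => neg_ne_zero.mpr (n0 n)
  have n1 : ∀ n : ℕ, n ≠ 0 → ‖x ^ n‖ < 1 := fun n h => norm_pow_lt hx1 h
  have m1 : ∀ n : ℕ, n ≠ 0 → ‖-x ^ n‖ < 1 := fun n h => by rw [norm_neg]; exact n1 n h
  have hm0 : -x ≠ 0 := neg_ne_zero.mpr hx
  have hm1 : ‖-x‖ < 1 := by rwa [norm_neg]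
  have z1 : ramTheta (-x) (-x ^ 9) ≠ 0 := theta_ne hm0 (m0 9) hm1 (m1 9 (by norm_num))
  have z2 : ramTheta (-x ^ 3) (-x ^ 7) ≠ 0 :=
    theta_ne (m0 3) (m0 7) (m1 3 (by norm_num)) (m1 7 (by norm_num))
  have z3 : psi (-x ^ 5) ≠ 0 := theta_ne (m0 5) (pow_ne_zero 3 (m0 5)) (m1 5 (by norm_num))
    (norm_pow_lt (m1 5 (by norm_num)) (by norm_num))
  have z4 : phi (-x) ≠ 0 := theta_ne hm0 hm0 hm1 hm1
  have z5 : psi (x ^ 5) ≠ 0 := theta_ne (n0 5) (pow_ne_zero 3 (n0 5)) (n1 5 (by norm_num))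
    (norm_pow_lt (n1 5 (by norm_num)) (by norm_num))
  have hA := psi_sq_sub (n0 2) (n1 2 (by norm_num))
  rw [show (x ^ 2) ^ 5 = x ^ 10 by ring, show (x ^ 2) ^ 4 = x ^ 8 by ring,
    show (x ^ 2) ^ 2 = x ^ 4 by ring, show (x ^ 2) ^ 3 = x ^ 6 by ring] at hA
  have hP := omega_prod hx hx1
  have h1 := omega_mul1 hx hx1
  have h2 := omega_mul2 hx hx1
  have h3 := omega_mul3 hx hx1
  generalize ramTheta (-x) (-x ^ 9) = d1 at *
  generalize ramTheta (-x ^ 3) (-x ^ 7) = d2 at *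
  generalize ramTheta (x ^ 4) (x ^ 6) = u1 at *
  generalize ramTheta (x ^ 2) (x ^ 8) = u2 at *
  generalize ramTheta (-x) (x ^ 4) = v1 at *
  generalize ramTheta (x ^ 2) (-x ^ 3) = v2 at *
  have e1 : u1 / d1 - x * u2 / d2 =
      (psi (x ^ 2) ^ 2 - x ^ 2 * psi (x ^ 10) ^ 2) / psi (-x ^ 5) ^ 2 := by
    rw [hA]
    field_simp
    linear_combination (-psi (-x ^ 5) ^ 2) * h3 - (u2 * d2) * h1 - (psi (-x ^ 5) * v1) * h2
  have e2 : u1 / d1 * (x * u2 / d2) =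
      x * phi (-x ^ 10) * psi (-x) / (phi (-x) * psi (x ^ 5)) := by
    field_simp
    linear_combination hP
  calc (u1 / d1) ^ 2 + (x * u2 / d2) ^ 2
      = (u1 / d1 - x * u2 / d2) ^ 2 + 2 * (u1 / d1 * (x * u2 / d2)) := by ring
    _ = _ := by
      rw [e1, e2]
      ring
end

section
/- Let q be a real number with 0 < q < 1. Then ∑_{n∈ℤ} [q^{10n+5}/(1 − q^{10n+5})² + q^{10n}/(1 + q^{10n})²] = φ(q⁵)⁴/4. -/
namespace FourSq

open Filter Topology

/-- hyperbolic secant in exponential form -/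
noncomputable def s (q : ℝ) (n : ℤ) : ℝ := 2 * q ^ n / (1 + (q ^ n) ^ 2)

/-- hyperbolic tangent in exponential form -/
noncomputable def th (q : ℝ) (n : ℤ) : ℝ := (1 - (q ^ n) ^ 2) / (1 + (q ^ n) ^ 2)

noncomputable def S (e q : ℝ) : ℝ := ∑' n : ℤ, e ^ n * s q n

lemma hs_congr {α : Type*} {f g : α → ℝ} {a b : ℝ} (h : HasSum f a) (hf : ∀ n, g n = f n)
    (ha : b = a) : HasSum g b := by
  rw [ha, funext hf]; exact h

lemma s_pos {q : ℝ} (h0 : 0 < q) (n : ℤ) : 0 < s q n := by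
  unfold s; positivity

lemma s_neg {q : ℝ} (h0 : 0 < q) (n : ℤ) : s q (-n) = s q n := by
  unfold s
  have : 0 < q ^ n := by positivity
  rw [zpow_neg]; field_simp; ring

lemma th_neg {q : ℝ} (h0 : 0 < q) (n : ℤ) : th q (-n) = - th q n := by
  unfold th
  have : 0 < q ^ n := by positivity
  rw [zpow_neg]; field_simp; ring

lemma s_nat_le {q : ℝ} (h0 : 0 < q) (n : ℕ) : s q n ≤ 2 * q ^ n := by
  unfold s
  have : 0 < q ^ n := by positivity
  rw [zpow_natCast]
  apply div_le_self (by positivity)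
  nlinarith [sq_nonneg (q ^ n)]

lemma s_summable {q : ℝ} (h0 : 0 < q) (h1 : q < 1) : Summable (s q) := by
  have h : Summable (fun n : ℕ => s q n) :=
    Summable.of_nonneg_of_le (fun n => (s_pos h0 _).le) (s_nat_le h0)
      ((summable_geometric_of_lt_one h0.le h1).mul_left 2)
  refine Summable.of_nat_of_neg h ?_
  simpa only [s_neg h0] using h

lemma pm_abs {e : ℝ} (he : e = 1 ∨ e = -1) (n : ℤ) : |e ^ n| = 1 := by
  rcases he with rfl | rfl <;> simp [abs_zpow]

lemma pm_summable {α : Type*} {e : ℝ} (he : e = 1 ∨ e = -1) {g : α → ℝ} (a : α → ℤ)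
    (hg : Summable g) : Summable (fun n => e ^ (a n) * g n) := by
  apply Summable.of_norm
  simp only [Real.norm_eq_abs, abs_mul, pm_abs he, one_mul]
  exact hg.abs

lemma th_sub {q : ℝ} (h0 : 0 < q) (m k : ℤ) :
    th q (m + k) - th q m = (1 - (q ^ k) ^ 2) / (2 * q ^ k) * (s q m * s q (m + k)) := by
  unfold th s
  have h1 : 0 < q ^ m := by positivity
  have h2 : 0 < q ^ k := by positivity
  rw [zpow_add₀ h0.ne']
  generalize q ^ m = x at *
  generalize q ^ k = y at *
  field_simp
  ring

lemma zpow_sq_ne_one {q : ℝ} (h0 : 0 < q) (h1 : q < 1) {k : ℤ} (hk : k ≠ 0) :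
    1 - (q ^ k) ^ 2 ≠ 0 := by
  intro h
  have : q ^ k = 1 := by
    have : 0 < q ^ k := by positivity
    nlinarith
  rw [zpow_eq_one_iff_right₀ h0.le h1.ne] at this
  exact hk this

lemma ss_eq {q : ℝ} (h0 : 0 < q) (h1 : q < 1) (m : ℤ) {k : ℤ} (hk : k ≠ 0) :
    s q m * s q (m + k) = 2 * q ^ k / (1 - (q ^ k) ^ 2) * (th q (m + k) - th q m) := by
  rw [th_sub h0]
  have := zpow_sq_ne_one h0 h1 hk
  have h2 : 0 < q ^ k := by positivity
  field_simp

lemma th_mono {q : ℝ} (h0 : 0 < q) (h1 : q < 1) (m : ℤ) : 0 ≤ th q (m + 1) - th q m := by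
  rw [th_sub h0]
  have := s_pos h0 m
  have := s_pos h0 (m+1)
  have : 0 ≤ 1 - (q ^ (1:ℤ)) ^ 2 := by rw [zpow_one]; nlinarith
  positivity

lemma th_hasSum_one {q : ℝ} (h0 : 0 < q) (h1 : q < 1) :
    HasSum (fun m : ℤ => th q (m + 1) - th q m) 2 := by
  have h : HasSum (fun n : ℕ => th q ((n : ℤ) + 1) - th q n) 1 := by
    rw [hasSum_iff_tendsto_nat_of_nonneg (fun n => th_mono h0 h1 n)]
    have : ∀ n : ℕ, ∑ i ∈ Finset.range n, (th q ((i : ℤ) + 1) - th q i) = th q n := by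
      intro n
      have := Finset.sum_range_sub (fun i : ℕ => th q i) n
      simp only [Nat.cast_add, Nat.cast_one] at this
      rw [this]
      simp [th]
    simp only [this]
    unfold th
    simp only [zpow_natCast]
    have h := tendsto_pow_atTop_nhds_zero_of_lt_one h0.le h1
    have := ((tendsto_const_nhds (x := (1:ℝ))).sub (h.pow 2)).div
      ((tendsto_const_nhds (x := (1:ℝ))).add (h.pow 2)) (by norm_num)
    simpa [Pi.div_def] using this
  have := HasSum.of_nat_of_neg_add_one (f := fun m : ℤ => th q (m + 1) - th q m) h (m' := 1) (by
    convert h using 2 with n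
    rw [show -((n : ℤ) + 1) + 1 = -n by ring, th_neg h0, th_neg h0]; ring)
  norm_num at this
  exact this

lemma th_hasSum {q : ℝ} (h0 : 0 < q) (h1 : q < 1) (k : ℤ) :
    HasSum (fun m : ℤ => th q (m + k) - th q m) (2 * k) := by
  have base := th_hasSum_one h0 h1
  induction k using Int.induction_on with
  | zero => simp
  | succ i ih =>
    have h2 := ((Equiv.addRight (i : ℤ)).hasSum_iff.mpr base).add ih
    refine hs_congr h2 (fun m => ?_) ?_
    · simp only [Function.comp, Equiv.coe_addRight]; rw [add_assoc]; ring
    · push_cast; ring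
  | pred i ih =>
    have h2 := ih.sub ((Equiv.addRight (-(i : ℤ) - 1)).hasSum_iff.mpr base)
    refine hs_congr h2 (fun m => ?_) ?_
    · simp only [Function.comp, Equiv.coe_addRight]
      rw [show m + (-(i : ℤ) - 1) + 1 = m + -i by ring]; ring
    · push_cast; ring

lemma ss_summable {q : ℝ} (h0 : 0 < q) (h1 : q < 1) (k : ℤ) :
    Summable (fun m => s q m * s q (m + k)) := by
  have hs := s_summable h0 h1
  have h := hs.mul_of_nonneg hs (fun n => (s_pos h0 n).le) (fun n => (s_pos h0 n).le)
  exact h.comp_injective (i := fun m : ℤ => (m, m + k)) (by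
    intro a b h; simpa using (Prod.mk.inj h).1)

noncomputable def C (e q : ℝ) (k : ℤ) : ℝ := ∑' m : ℤ, e ^ m * (s q m * s q (m + k))

lemma C_one {q : ℝ} (h0 : 0 < q) (h1 : q < 1) {k : ℤ} (hk : k ≠ 0) :
    C 1 q k = 4 * k * q ^ k / (1 - (q ^ k) ^ 2) := by
  unfold C
  simp only [one_zpow, one_mul, fun m => ss_eq h0 h1 m hk]
  rw [((th_hasSum h0 h1 k).mul_left _).tsum_eq]
  ring

lemma neg_zpow_two_mul (j : ℤ) : (-1 : ℝ) ^ (2 * j) = 1 := by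
  rw [zpow_mul]; norm_num

lemma C_neg_even {q : ℝ} (h0 : 0 < q) (h1 : q < 1) {j : ℤ} (hk : 2 * j ≠ 0) :
    C (-1) q (2 * j) = 0 := by
  have base : HasSum (fun m : ℤ => (-1 : ℝ) ^ m * (th q (m + 2) - th q m)) 0 := by
    have hsum : Summable (fun m : ℤ => (-1 : ℝ) ^ m * (th q (m + 1) - th q m)) :=
      pm_summable (Or.inr rfl) (fun m => m) (th_hasSum_one h0 h1).summable
    obtain ⟨a, ha⟩ := hsum
    have h2 := ha.sub ((Equiv.addRight (1 : ℤ)).hasSum_iff.mpr ha)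
    rw [sub_self] at h2
    refine hs_congr h2 (fun m => ?_) rfl
    simp only [Function.comp, Equiv.coe_addRight]
    rw [zpow_add₀ (by norm_num), show m + 1 + 1 = m + 2 by ring]
    norm_num; ring
  have key : ∀ j : ℤ, HasSum (fun m : ℤ => (-1 : ℝ) ^ m * (th q (m + 2 * j) - th q m)) 0 := by
    intro j
    induction j using Int.induction_on with
    | zero => simp
    | succ i ih =>
      have h2 := ((Equiv.addRight (2 * i : ℤ)).hasSum_iff.mpr base).add ih
      refine hs_congr h2 (fun m => ?_) ?_
      · simp only [Function.comp, Equiv.coe_addRight]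
        rw [zpow_add₀ (by norm_num), neg_zpow_two_mul,
          show m + 2 * ((i : ℤ) + 1) = m + 2 * i + 2 by ring]; ring
      · simp
    | pred i ih =>
      have h2 := ih.sub ((Equiv.addRight (2 * (-(i : ℤ) - 1))).hasSum_iff.mpr base)
      refine hs_congr h2 (fun m => ?_) ?_
      · simp only [Function.comp, Equiv.coe_addRight]
        rw [zpow_add₀ (by norm_num), neg_zpow_two_mul,
          show m + 2 * (-(i : ℤ) - 1) + 2 = m + 2 * -i by ring]; ring
      · simp
  unfold C
  simp only [fun m => ss_eq h0 h1 m hk]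
  have := ((key j).mul_left (2 * q ^ (2 * j) / (1 - (q ^ (2 * j)) ^ 2))).tsum_eq
  rw [mul_zero] at this
  rw [← this]
  congr 1; ext m; ring

lemma C_neg_odd {q : ℝ} (h0 : 0 < q) (j : ℤ) : C (-1) q (2 * j + 1) = 0 := by
  have : C (-1) q (2 * j + 1) = - C (-1) q (2 * j + 1) := by
    unfold C
    conv_lhs => rw [← (Equiv.subLeft (-(2 * j + 1))).tsum_eq]
    rw [← tsum_neg]
    congr 1; ext m
    simp only [Equiv.subLeft_apply]
    rw [show -(2 * j + 1) - m + (2 * j + 1) = -m by ring,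
      show -(2 * j + 1) - m = -(m + (2 * j + 1)) by ring, s_neg h0, s_neg h0]
    rw [zpow_neg, zpow_add₀ (by norm_num), zpow_add₀ (by norm_num), neg_zpow_two_mul]
    have hm : ((-1 : ℝ) ^ m)⁻¹ = (-1 : ℝ) ^ m := by
      rw [← inv_zpow]; norm_num
    have h1 : (1 * (-1 : ℝ) ^ (1 : ℤ))⁻¹ = -1 := by norm_num
    rw [mul_inv, hm, h1]; ring
  linarith

lemma C_neg {q : ℝ} (h0 : 0 < q) (h1 : q < 1) {k : ℤ} (hk : k ≠ 0) : C (-1) q k = 0 := by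
  rcases Int.even_or_odd' k with ⟨j, rfl | rfl⟩
  · exact C_neg_even h0 h1 hk
  · exact C_neg_odd h0 j

def shear : ℤ × ℤ ≃ ℤ × ℤ where
  toFun p := (p.2, p.2 + p.1)
  invFun p := (p.2 - p.1, p.1)
  left_inv p := by ext <;> simp
  right_inv p := by ext <;> simp

lemma S_summable {e q : ℝ} (he : e = 1 ∨ e = -1) (h0 : 0 < q) (h1 : q < 1) :
    Summable (fun n : ℤ => e ^ n * s q n) :=
  pm_summable he (fun m => m) (s_summable h0 h1)

lemma S_mul {e d q : ℝ} (he : e = 1 ∨ e = -1) (hd : d = 1 ∨ d = -1) (h0 : 0 < q) (h1 : q < 1) :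
    HasSum (fun k : ℤ => d ^ k * C (e * d) q k) (S e q * S d q) := by
  have hprod := summable_mul_of_summable_norm (S_summable he h0 h1).norm (S_summable hd h0 h1).norm
  have h := hprod.hasSum
  rw [← tsum_mul_tsum_of_summable_norm (S_summable he h0 h1).norm (S_summable hd h0 h1).norm] at h
  have h2 := shear.hasSum_iff.mpr h
  refine h2.prod_fiberwise (fun k => ?_)
  have hed : e * d = 1 ∨ e * d = -1 := by
    rcases he with rfl | rfl <;> rcases hd with rfl | rfl <;> norm_num
  have h3 := (pm_summable hed (fun m => m) (ss_summable h0 h1 k)).hasSum.mul_left (d ^ k)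
  refine hs_congr h3 (fun m => ?_) rfl
  simp only [Function.comp, shear, Equiv.coe_fn_mk]
  rw [zpow_add₀ (by rcases hd with rfl | rfl <;> norm_num), mul_zpow]
  ring

lemma C_zero {q : ℝ} : C 1 q 0 = ∑' m : ℤ, s q m ^ 2 := by
  unfold C; congr 1; ext m; simp; ring

lemma S_mul_neg {q : ℝ} (h0 : 0 < q) (h1 : q < 1) :
    S 1 q * S (-1) q = ∑' m : ℤ, (-1) ^ m * s q m ^ 2 := by
  have h := S_mul (Or.inl rfl) (Or.inr rfl) h0 h1 (e := 1) (d := -1)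
  rw [← h.tsum_eq, tsum_eq_single 0]
  · simp only [zpow_zero, one_mul]; unfold C; congr 1; ext m; rw [add_zero]; ring
  · intro k hk; rw [one_mul, C_neg h0 h1 hk, mul_zero]

lemma S_sq {e q : ℝ} (he : e = 1 ∨ e = -1) (h0 : 0 < q) (h1 : q < 1) :
    HasSum (fun k : ℤ => e ^ k * (4 * k * q ^ k / (1 - (q ^ k) ^ 2)))
      (S e q ^ 2 - ∑' m : ℤ, s q m ^ 2) := by
  have h := S_mul he he h0 h1
  have hee : e * e = 1 := by rcases he with rfl | rfl <;> norm_num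
  rw [hee] at h
  have h2 := h.sub (hasSum_ite_eq (0 : ℤ) (C 1 q 0))
  rw [C_zero, ← sq] at h2
  refine hs_congr h2 (fun k => ?_) rfl
  by_cases hk : k = 0
  · subst hk; simp [C_zero]
  · rw [C_one h0 h1 hk]; simp [hk]

lemma lambert {e Q : ℝ} (he : e = 1 ∨ e = -1) (h0 : 0 < Q) (h1 : Q < 1) :
    ∑' j : ℕ, e ^ j * (j * Q ^ j / (1 - (Q ^ j) ^ 2)) =
      ∑' i : ℕ, e * Q ^ (2 * i + 1) / (1 - e * Q ^ (2 * i + 1)) ^ 2 := by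
  have habs : |e| = 1 := by rcases he with rfl | rfl <;> simp
  have hsum : Summable (Function.uncurry (fun (i j : ℕ) => (j : ℝ) * (e * Q ^ (2 * i + 1)) ^ j)) := by
    have hg1 : Summable (fun i : ℕ => (Q ^ 2) ^ i) :=
      summable_geometric_of_lt_one (by positivity) (by nlinarith)
    have hg2 : Summable (fun j : ℕ => (j : ℝ) * Q ^ j) :=
      (hasSum_coe_mul_geometric_of_norm_lt_one (by rwa [Real.norm_eq_abs, abs_of_pos h0])).summable
    have hg := hg1.mul_of_nonneg hg2 (fun i => by positivity) (fun j => by positivity)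
    refine Summable.of_norm_bounded hg ?_
    rintro ⟨i, j⟩
    simp only [Function.uncurry, norm_mul, norm_pow, Real.norm_eq_abs, habs, one_mul, Nat.abs_cast,
      abs_of_pos h0]
    rcases Nat.eq_zero_or_pos j with rfl | hj
    · simp
    · have : (Q ^ (2 * i + 1)) ^ j ≤ (Q ^ 2) ^ i * Q ^ j := by
        rw [← pow_mul, ← pow_mul, ← pow_add]
        apply pow_le_pow_of_le_one h0.le h1.le
        nlinarith [Nat.zero_le i]
      have hj0 : (0 : ℝ) ≤ j := by positivity
      nlinarith [mul_le_mul_of_nonneg_left this hj0]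
  have hc := hsum.tsum_comm
  have e1 : ∀ i : ℕ, ∑' j : ℕ, (j : ℝ) * (e * Q ^ (2 * i + 1)) ^ j =
      e * Q ^ (2 * i + 1) / (1 - e * Q ^ (2 * i + 1)) ^ 2 := by
    intro i
    apply (hasSum_coe_mul_geometric_of_norm_lt_one _).tsum_eq
    rw [norm_mul, norm_pow, Real.norm_eq_abs, Real.norm_eq_abs, habs, one_mul, abs_of_pos h0]
    exact pow_lt_one₀ h0.le h1 (by omega)
  have e2 : ∀ j : ℕ, ∑' i : ℕ, (j : ℝ) * (e * Q ^ (2 * i + 1)) ^ j =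
      e ^ j * (j * Q ^ j / (1 - (Q ^ j) ^ 2)) := by
    intro j
    rcases Nat.eq_zero_or_pos j with rfl | hj
    · simp
    · have hlt : (Q ^ j) ^ 2 < 1 :=
        pow_lt_one₀ (by positivity) (pow_lt_one₀ h0.le h1 (by omega)) (by norm_num)
      have := (hasSum_geometric_of_lt_one (by positivity) hlt).mul_left ((j : ℝ) * e ^ j * Q ^ j)
      have h2 := (hs_congr this (g := fun i : ℕ => (j : ℝ) * (e * Q ^ (2 * i + 1)) ^ j)
        (fun i => by rw [mul_pow]; ring) rfl).tsum_eq
      rw [h2]; field_simp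
  simp only [e1, e2] at hc
  exact hc

lemma tsum_int_even_fun {f : ℤ → ℝ} (hf : Summable f) (hz : f 0 = 0) (he : ∀ n, f (-n) = f n) :
    ∑' n : ℤ, f n = 2 * ∑' n : ℕ, f n := by
  have h : Summable (fun n : ℕ => f n) := hf.comp_injective Nat.cast_injective
  have := HasSum.of_nat_of_neg h.hasSum (by simpa only [he] using h.hasSum)
  rw [this.tsum_eq, hz]; ring

lemma S_sq' {e q : ℝ} (he : e = 1 ∨ e = -1) (h0 : 0 < q) (h1 : q < 1) :
    S e q ^ 2 = ∑' m : ℤ, s q m ^ 2 +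
      8 * ∑' i : ℕ, e * q ^ (2 * i + 1) / (1 - e * q ^ (2 * i + 1)) ^ 2 := by
  have h := S_sq he h0 h1
  have h2 := tsum_int_even_fun h.summable (by simp) (by
    intro n
    by_cases hn : n = 0
    · simp [hn]
    · have hx := zpow_sq_ne_one h0 h1 hn
      have hx2 := zpow_sq_ne_one h0 h1 (neg_ne_zero.mpr hn)
      have hp : 0 < q ^ n := by positivity
      have hee : e ^ (-n) = e ^ n := by
        rw [← inv_zpow']
        rcases he with rfl | rfl <;> norm_num
      rw [hee]
      rw [zpow_neg] at *
      congr 1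
      have hx3 : (q ^ n) ^ 2 - 1 ≠ 0 := fun h => hx (by linarith)
      rw [div_eq_div_iff hx2 hx]
      push_cast
      field_simp
      ring)
  rw [h.tsum_eq] at h2
  rw [← lambert he h0 h1]
  have h3 : ∑' n : ℕ, e ^ (n : ℤ) * (4 * ((n : ℤ) : ℝ) * q ^ (n : ℤ) / (1 - (q ^ (n : ℤ)) ^ 2)) =
      4 * ∑' j : ℕ, e ^ j * (j * q ^ j / (1 - (q ^ j) ^ 2)) := by
    rw [← tsum_mul_left]
    congr 1; ext n; simp only [zpow_natCast, Int.cast_natCast]; ring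
  rw [h3] at h2
  linarith

lemma odd_fun_hasSum {f : ℤ → ℝ} (he : ∀ n, f (-n) = f n) {a : ℝ}
    (h : HasSum (fun i : ℕ => f (2 * i + 1)) a) : HasSum (fun n : ℤ => f (2 * n + 1)) (2 * a) := by
  rw [two_mul]
  refine HasSum.of_nat_of_neg_add_one (f := fun n : ℤ => f (2 * n + 1)) h ?_
  refine hs_congr h (fun n => ?_) rfl
  rw [← he]; ring_nf

lemma tsum_even_odd {f : ℤ → ℝ} (hf : Summable f) :
    ∑' n : ℤ, f n = ∑' n : ℤ, f (2 * n) + ∑' n : ℤ, f (2 * n + 1) := by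
  have i1 : Function.Injective (fun n : ℤ => 2 * n) := fun a b h => by simpa using h
  have i2 : Function.Injective (fun n : ℤ => 2 * n + 1) := fun a b h => by simpa using h
  have h1 := (hf.comp_injective i1).hasSum
  have h2 := (hf.comp_injective i2).hasSum
  have h1' := (i1.hasSum_iff (f := fun n => if Even n then f n else 0) (by
    intro x hx
    rw [if_neg]
    rintro ⟨k, rfl⟩
    exact hx ⟨k, by ring⟩)).mp (hs_congr h1 (fun n => by simp) rfl)
  have h2' := (i2.hasSum_iff (f := fun n => if Even n then 0 else f n) (by
    intro x hx
    rw [if_pos]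
    by_contra h
    rw [Int.not_even_iff_odd] at h
    obtain ⟨k, rfl⟩ := h
    exact hx ⟨k, rfl⟩)).mp (hs_congr h2 (fun n => by simp) rfl)
  refine (hs_congr (h1'.add h2') (fun n => ?_) rfl).tsum_eq
  by_cases h : Even n <;> simp [h]

lemma s_two {q : ℝ} (n : ℤ) : s (q ^ 2) n = s q (2 * n) := by
  unfold s
  have : (q ^ 2) ^ n = q ^ (2 * n) := by rw [zpow_mul]; norm_cast
  rw [this]

lemma neg_zpow_odd (j : ℤ) : (-1 : ℝ) ^ (2 * j + 1) = -1 := by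
  rw [zpow_add₀ (by norm_num), neg_zpow_two_mul]; norm_num

lemma S_add {q : ℝ} (h0 : 0 < q) (h1 : q < 1) : S 1 q + S (-1) q = 2 * S 1 (q ^ 2) := by
  unfold S
  rw [tsum_even_odd (S_summable (Or.inl rfl) h0 h1), tsum_even_odd (S_summable (Or.inr rfl) h0 h1)]
  simp only [s_two, one_zpow, neg_zpow_two_mul, neg_zpow_odd, one_mul, neg_mul, tsum_neg]
  ring

lemma S_sub {q : ℝ} (h0 : 0 < q) (h1 : q < 1) :
    S 1 q - S (-1) q = 2 * ∑' n : ℤ, s q (2 * n + 1) := by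
  unfold S
  rw [tsum_even_odd (S_summable (Or.inl rfl) h0 h1), tsum_even_odd (S_summable (Or.inr rfl) h0 h1)]
  simp only [one_zpow, neg_zpow_two_mul, neg_zpow_odd, one_mul, neg_mul, tsum_neg]
  ring

lemma ssq_summable {q : ℝ} (h0 : 0 < q) (h1 : q < 1) : Summable (fun m => s q m ^ 2) := by
  have := ss_summable h0 h1 0
  simpa [sq] using this

lemma S_prod {q : ℝ} (h0 : 0 < q) (h1 : q < 1) : S 1 q * S (-1) q = S (-1) (q ^ 2) ^ 2 := by
  have h0' : 0 < q ^ 2 := by positivity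
  have h1' : q ^ 2 < 1 := by nlinarith
  rw [S_mul_neg h0 h1, S_sq' (Or.inr rfl) h0' h1']
  rw [tsum_even_odd (pm_summable (Or.inr rfl) (fun m => m) (ssq_summable h0 h1))]
  simp only [s_two, neg_zpow_two_mul, neg_zpow_odd, one_mul]
  congr 1
  have hodd : Summable (fun i : ℕ => s q (2 * i + 1) ^ 2) :=
    (ssq_summable h0 h1).comp_injective (i := fun i : ℕ => (2 * i + 1 : ℤ)) (by
      intro a b h; simpa using h)
  have h2 := odd_fun_hasSum (f := fun m => s q m ^ 2) (fun n => by simp only [s_neg h0]) hodd.hasSum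
  simp only [neg_mul, one_mul, tsum_neg]
  rw [h2.tsum_eq, ← tsum_mul_left, ← tsum_mul_left, ← tsum_neg]
  congr 1; ext i
  have : q ^ (2 * (i : ℤ) + 1) = q ^ (2 * i + 1) := by norm_cast
  unfold s
  have hq : (q ^ 2) ^ (2 * i + 1) = (q ^ (2 * i + 1)) ^ 2 := by
    rw [← pow_mul, ← pow_mul, mul_comm]
  rw [this, hq, sub_neg_eq_add, div_pow]
  ring

noncomputable def F (e q : ℝ) : ℝ := ∑' n : ℤ, e ^ n * q ^ (n.natAbs ^ 2)

lemma th_nat_le {q : ℝ} (h0 : 0 < q) (h1 : q < 1) (n : ℕ) :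
    q ^ ((n : ℤ).natAbs ^ 2) ≤ 1 * q ^ n := by
  rw [one_mul]
  apply pow_le_pow_of_le_one h0.le h1.le
  simp only [Int.natAbs_natCast]
  nlinarith [Nat.le_mul_self n]

lemma theta_summable {q : ℝ} (h0 : 0 < q) (h1 : q < 1) :
    Summable (fun n : ℤ => q ^ (n.natAbs ^ 2)) := by
  have h : Summable (fun n : ℕ => q ^ ((n : ℤ).natAbs ^ 2)) :=
    Summable.of_nonneg_of_le (fun n => by positivity) (th_nat_le h0 h1)
      ((summable_geometric_of_lt_one h0.le h1).mul_left 1)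
  refine Summable.of_nat_of_neg h ?_
  simpa only [Int.natAbs_neg] using h

lemma F_summable {e q : ℝ} (he : e = 1 ∨ e = -1) (h0 : 0 < q) (h1 : q < 1) :
    Summable (fun n : ℤ => e ^ n * q ^ (n.natAbs ^ 2)) :=
  pm_summable he (fun m => m) (theta_summable h0 h1)

noncomputable def G (q : ℝ) (p : ℤ × ℤ) : ℝ := q ^ (p.1.natAbs ^ 2) * q ^ (p.2.natAbs ^ 2)

lemma F_mul {e d q : ℝ} (he : e = 1 ∨ e = -1) (hd : d = 1 ∨ d = -1) (h0 : 0 < q) (h1 : q < 1) :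
    HasSum (fun p : ℤ × ℤ => e ^ p.1 * d ^ p.2 * G q p) (F e q * F d q) := by
  have h := (summable_mul_of_summable_norm (F_summable he h0 h1).norm
    (F_summable hd h0 h1).norm).hasSum
  rw [← tsum_mul_tsum_of_summable_norm (F_summable he h0 h1).norm (F_summable hd h0 h1).norm] at h
  exact hs_congr h (fun p => by unfold G; ring) rfl

lemma G_rot (q : ℝ) (a b : ℤ) : G q (a + b, a - b) = G (q ^ 2) (a, b) := by
  unfold G
  rw [← pow_add, ← pow_add, ← pow_mul]
  congr 1
  zify
  simp only [sq_abs]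
  ring

lemma rot_sum {q : ℝ} {w : ℤ × ℤ → ℝ} (hw : ∀ p : ℤ × ℤ, Odd (p.1 + p.2) → w p = 0) :
    ∑' p : ℤ × ℤ, w p * G q p = ∑' p : ℤ × ℤ, w (p.1 + p.2, p.1 - p.2) * G (q ^ 2) p := by
  have inj : Function.Injective (fun p : ℤ × ℤ => (p.1 + p.2, p.1 - p.2)) := by
    rintro ⟨a, b⟩ ⟨c, d⟩ h
    simp only [Prod.mk.injEq] at h
    ext <;> simp only <;> omega
  rw [← inj.tsum_eq (f := fun p => w p * G q p)]
  · congr 1; ext p; rw [G_rot]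
  · rintro ⟨m, n⟩ h
    have hne : w (m, n) ≠ 0 := by
      intro h'; simp [h'] at h
    have hev : ¬ Odd (m + n) := fun h' => hne (hw _ h')
    rw [Int.not_odd_iff_even] at hev
    obtain ⟨k, hk⟩ := hev
    exact ⟨(k, m - k), by ext <;> simp only <;> omega⟩

lemma neg_zpow_of_odd {n : ℤ} (h : Odd n) : (-1 : ℝ) ^ n = -1 := by
  obtain ⟨k, rfl⟩ := h; exact neg_zpow_odd k

lemma pm_inv (n : ℤ) : (-1 : ℝ) ^ (-n) = (-1) ^ n := by
  rw [← inv_zpow']; norm_num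

lemma pm_sq (n : ℤ) : (-1 : ℝ) ^ n * (-1) ^ n = 1 := by
  rw [← zpow_add₀ (by norm_num), ← two_mul, neg_zpow_two_mul]

lemma F_add {q : ℝ} (h0 : 0 < q) (h1 : q < 1) :
    F 1 q ^ 2 + F (-1) q ^ 2 = 2 * F 1 (q ^ 2) ^ 2 := by
  have h0' : 0 < q ^ 2 := by positivity
  have h1' : q ^ 2 < 1 := by nlinarith
  have hl := (F_mul (Or.inl rfl) (Or.inl rfl) h0 h1).add (F_mul (Or.inr rfl) (Or.inr rfl) h0 h1)
  have hr := (F_mul (Or.inl rfl) (Or.inl rfl) h0' h1').mul_left 2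
  rw [sq, sq, sq, ← hr.tsum_eq, ← (hs_congr hl
    (g := fun p => (1 + (-1 : ℝ) ^ (p.1 + p.2)) * G q p)
    (fun p => by rw [zpow_add₀ (by norm_num)]; simp only [one_zpow]; ring) rfl).tsum_eq, rot_sum]
  · congr 1; ext p
    simp only [one_zpow]
    rw [show p.1 + p.2 + (p.1 - p.2) = 2 * p.1 by ring, neg_zpow_two_mul]; ring
  · intro p hp
    rw [neg_zpow_of_odd hp]; ring

lemma F_prod {q : ℝ} (h0 : 0 < q) (h1 : q < 1) :
    F 1 q * F (-1) q = F (-1) (q ^ 2) ^ 2 := by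
  have h0' : 0 < q ^ 2 := by positivity
  have h1' : q ^ 2 < 1 := by nlinarith
  have hl := (F_mul (Or.inl rfl) (Or.inr rfl) h0 h1).add (F_mul (Or.inr rfl) (Or.inl rfl) h0 h1)
  have hr := (F_mul (Or.inr rfl) (Or.inr rfl) h0' h1').mul_left 2
  have key : F 1 q * F (-1) q + F (-1) q * F 1 q = 2 * (F (-1) (q ^ 2) * F (-1) (q ^ 2)) := by
    rw [← hr.tsum_eq, ← (hs_congr hl
      (g := fun p => ((-1 : ℝ) ^ p.2 + (-1 : ℝ) ^ p.1) * G q p)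
      (fun p => by simp only [one_zpow]; ring) rfl).tsum_eq, rot_sum]
    · congr 1; ext p
      simp only
      rw [sub_eq_add_neg, zpow_add₀ (by norm_num), zpow_add₀ (by norm_num), pm_inv]; ring
    · intro p hp
      have h := neg_zpow_of_odd hp
      rw [zpow_add₀ (by norm_num)] at h
      have h2 := pm_sq p.1
      have : (-1 : ℝ) ^ p.2 = - (-1) ^ p.1 := by
        calc (-1 : ℝ) ^ p.2 = ((-1 : ℝ) ^ p.1 * (-1) ^ p.1) * (-1) ^ p.2 := by rw [h2, one_mul]
          _ = (-1 : ℝ) ^ p.1 * ((-1) ^ p.1 * (-1) ^ p.2) := by ring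
          _ = _ := by rw [h]; ring
      rw [this]; ring
  rw [sq]; linarith [mul_comm (F 1 q) (F (-1) q)]

lemma F_even {q : ℝ} : ∑' n : ℤ, q ^ ((2 * n).natAbs ^ 2) = F 1 (q ^ 4) := by
  unfold F
  congr 1; ext n
  rw [one_zpow, one_mul, ← pow_mul, Int.natAbs_mul]
  congr 1
  simp; ring

lemma F_add_lin {q : ℝ} (h0 : 0 < q) (h1 : q < 1) : F 1 q + F (-1) q = 2 * F 1 (q ^ 4) := by
  rw [← F_even]
  unfold F
  rw [tsum_even_odd (F_summable (Or.inl rfl) h0 h1), tsum_even_odd (F_summable (Or.inr rfl) h0 h1)]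
  simp only [one_zpow, neg_zpow_two_mul, neg_zpow_odd, one_mul, neg_mul, tsum_neg]
  ring

lemma F_sub {q : ℝ} (h0 : 0 < q) (h1 : q < 1) :
    F 1 q - F (-1) q = 2 * ∑' n : ℤ, q ^ ((2 * n + 1).natAbs ^ 2) := by
  unfold F
  rw [tsum_even_odd (F_summable (Or.inl rfl) h0 h1), tsum_even_odd (F_summable (Or.inr rfl) h0 h1)]
  simp only [one_zpow, neg_zpow_two_mul, neg_zpow_odd, one_mul, neg_mul, tsum_neg]
  ring

lemma bound_all {q : ℝ} (h0 : 0 < q) (h1 : q < 1) {f : ℤ → ℝ} (hf : Summable f) (hz : f 0 = 1)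
    (he : ∀ n, f (-n) = f n) (hp : ∀ n, 0 ≤ f n) (hb : ∀ n : ℕ, f n ≤ 2 * q ^ n) :
    1 ≤ ∑' n, f n ∧ ∑' n, f n ≤ 1 + 4 * q / (1 - q) := by
  constructor
  · rw [← hz]; exact hf.le_tsum 0 (fun n _ => hp n)
  · have h : Summable (fun n : ℕ => f n) := hf.comp_injective Nat.cast_injective
    have h2 := HasSum.of_nat_of_neg h.hasSum (by simpa only [he] using h.hasSum)
    have h3 := h.tsum_eq_zero_add
    have h4 : Summable (fun n : ℕ => f ((n + 1 : ℕ) : ℤ)) := (summable_nat_add_iff 1).mpr h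
    have h5 := ((hasSum_geometric_of_lt_one h0.le h1).mul_left (2 * q))
    have h6 := hasSum_le (fun n : ℕ => (hb (n + 1)).trans (by rw [pow_succ]; apply le_of_eq; ring)) h4.hasSum h5
    rw [h2.tsum_eq, h3, Nat.cast_zero, hz]
    have : 4 * q / (1 - q) = 2 * (2 * q * (1 - q)⁻¹) := by ring
    rw [this]; linarith

lemma bound_odd {q c : ℝ} (h0 : 0 < q) (h1 : q < 1) {f : ℤ → ℝ} (hf : Summable f)
    (he : ∀ n, f (-n) = f n) (hp : ∀ n, 0 ≤ f n) (hb : ∀ n : ℕ, f n ≤ c * q ^ n) :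
    2 * f 1 ≤ ∑' n : ℤ, f (2 * n + 1) ∧ ∑' n : ℤ, f (2 * n + 1) ≤ 2 * c * q / (1 - q ^ 2) := by
  have hodd : Summable (fun i : ℕ => f (2 * i + 1)) :=
    hf.comp_injective (i := fun i : ℕ => (2 * i + 1 : ℤ)) (by
      intro a b h; simpa using h)
  rw [(odd_fun_hasSum he hodd.hasSum).tsum_eq]
  constructor
  · have := hodd.le_tsum 0 (fun n _ => hp _)
    simp only [Nat.cast_zero, mul_zero, zero_add] at this
    linarith
  · have h5 := ((hasSum_geometric_of_lt_one (r := q ^ 2) (by positivity) (by nlinarith)).mul_left (c * q))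
    have h6 := hasSum_le (fun n : ℕ => by
      have := hb (2 * n + 1)
      push_cast at this
      refine this.trans (le_of_eq ?_)
      ring) hodd.hasSum h5
    have : 2 * c * q / (1 - q ^ 2) = 2 * (c * q * (1 - q ^ 2)⁻¹) := by ring
    rw [this]; linarith

lemma S_bounds {q : ℝ} (h0 : 0 < q) (h1 : q < 1) :
    1 ≤ S 1 q ∧ S 1 q ≤ 1 + 4 * q / (1 - q) := by
  have := bound_all h0 h1 (s_summable h0 h1) (by simp [s]; norm_num) (s_neg h0)
    (fun n => (s_pos h0 n).le) (s_nat_le h0)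
  simpa [S] using this

lemma F_bounds {q : ℝ} (h0 : 0 < q) (h1 : q < 1) :
    1 ≤ F 1 q ∧ F 1 q ≤ 1 + 4 * q / (1 - q) := by
  have := bound_all h0 h1 (theta_summable h0 h1) (by simp) (by simp)
    (fun n => by positivity) (fun n => (th_nat_le h0 h1 n).trans (by
      have : 0 < q ^ n := by positivity
      linarith))
  simpa [F] using this

lemma So_bounds {q : ℝ} (h0 : 0 < q) (h1 : q < 1) :
    4 * q / (1 + q ^ 2) ≤ (S 1 q - S (-1) q) / 2 ∧
      (S 1 q - S (-1) q) / 2 ≤ 4 * q / (1 - q ^ 2) := by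
  have := bound_odd h0 h1 (s_summable h0 h1) (s_neg h0) (fun n => (s_pos h0 n).le) (s_nat_le h0)
  rw [S_sub h0 h1, mul_div_cancel_left₀ _ (by norm_num)]
  refine ⟨le_trans (le_of_eq ?_) this.1, this.2.trans (le_of_eq ?_)⟩
  · simp [s]; ring
  · ring

lemma Fo_bounds {q : ℝ} (h0 : 0 < q) (h1 : q < 1) :
    4 * q ≤ (F 1 q ^ 2 - F (-1) q ^ 2) / 2 ∧
      (F 1 q ^ 2 - F (-1) q ^ 2) / 2 ≤ 4 * q / (1 - q ^ 2) * (1 + 4 * q ^ 4 / (1 - q ^ 4)) := by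
  have hB := bound_odd (c := 1) h0 h1 (theta_summable h0 h1) (by simp) (fun n => by positivity)
    (th_nat_le h0 h1)
  have hA := F_bounds (q := q ^ 4) (by positivity) (pow_lt_one₀ h0.le h1 (by norm_num))
  have : (F 1 q ^ 2 - F (-1) q ^ 2) / 2 = 2 * (∑' n : ℤ, q ^ ((2 * n + 1).natAbs ^ 2)) * F 1 (q ^ 4) := by
    have h3 := F_add_lin h0 h1
    have h2 := F_sub h0 h1
    linear_combination (F 1 q - F (-1) q) / 2 * h3 + F 1 (q ^ 4) * h2
  rw [this]
  simp only [Int.natAbs_one, one_pow, pow_one] at hB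
  set B := ∑' n : ℤ, q ^ ((2 * n + 1).natAbs ^ 2)
  constructor
  · nlinarith [hB.1, hA.1]
  · have e1 : 4 * q / (1 - q ^ 2) = 2 * (2 * 1 * q / (1 - q ^ 2)) := by ring
    rw [e1]
    have : 0 ≤ B := by linarith [hB.1]
    apply mul_le_mul (by linarith [hB.2]) hA.2 (by linarith [hA.1]) (by linarith [hB.2])

lemma compare {a o a' o' : ℕ → ℝ} (hap : ∀ n, 0 < a n) (hop : ∀ n, 0 < o n)
    (hap' : ∀ n, 0 < a' n) (hop' : ∀ n, 0 < o' n)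
    (ha : ∀ n, a n = a (n + 1) + o n) (ho : ∀ n, o n ^ 2 = 4 * o (n + 1) * a (n + 2))
    (ha' : ∀ n, a' n = a' (n + 1) + o' n) (ho' : ∀ n, o' n ^ 2 = 4 * o' (n + 1) * a' (n + 2))
    (hlim : ∀ c : ℝ, 1 < c → ∀ᶠ n in atTop, a n ≤ c * a' n ∧ o n ≤ c * o' n) :
    a 0 ≤ a' 0 := by
  have key : ∀ c : ℝ, 1 < c → a 0 ≤ c * a' 0 := by
    intro c hc
    obtain ⟨N, hN⟩ := eventually_atTop.mp (hlim c hc)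
    have : ∀ k : ℕ, ∀ n, N ≤ n + k → a n ≤ c * a' n ∧ o n ≤ c * o' n := by
      intro k
      induction k with
      | zero => exact fun n hn => hN n hn
      | succ k ih =>
        intro n hn
        obtain ⟨h1, h2⟩ := ih (n + 1) (by omega)
        obtain ⟨h3, h4⟩ := ih (n + 2) (by omega)
        have ho2 : o n ≤ c * o' n := by
          refine (sq_le_sq₀ (hop n).le (by have := hop' n; positivity)).mp ?_
          rw [mul_pow, ho, ho']
          have := mul_le_mul h2 h3 (hap _).le (by have := hop' (n + 1); positivity)
          nlinarith
        refine ⟨?_, ho2⟩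
        rw [ha n, ha' n]; linarith
    exact (this N 0 (by omega)).1
  by_contra h
  push Not at h
  have h2 := key ((1 + a 0 / a' 0) / 2) (by
    have : 1 < a 0 / a' 0 := by rwa [one_lt_div (hap' 0)]
    linarith)
  have h3 : (1 + a 0 / a' 0) / 2 * a' 0 = (a' 0 + a 0) / 2 := by
    have := (hap' 0).ne'
    field_simp
  linarith

lemma rec_gen {a b : ℕ → ℝ} (h1 : ∀ n, a n + b n = 2 * a (n + 1))
    (h2 : ∀ n, a n * b n = b (n + 1) ^ 2) (n : ℕ) :
    a n = a (n + 1) + (a n - b n) / 2 ∧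
    ((a n - b n) / 2) ^ 2 = 4 * ((a (n + 1) - b (n + 1)) / 2) * a (n + 2) := by
  constructor
  · linarith [h1 n]
  · have e1 := h1 n
    have e2 := h1 (n + 1)
    have e3 := h2 n
    have : a (n + 2) = (a (n + 1) + b (n + 1)) / 2 := by linarith
    rw [this]
    have : a (n + 1) = (a n + b n) / 2 := by linarith
    linear_combination (-1 : ℝ) * e3 + (a n + b n + 2 * a (n + 1)) / 4 * e1

lemma two_squares {q : ℝ} (h0 : 0 < q) (h1 : q < 1) : S 1 q = F 1 q ^ 2 := by
  set u : ℕ → ℝ := fun n => q ^ (2 ^ n) with hu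
  have u0 : ∀ n, 0 < u n := fun n => by simp only [hu]; positivity
  have u1 : ∀ n, u n < 1 := fun n => pow_lt_one₀ h0.le h1 (by positivity)
  have us : ∀ n, u (n + 1) = u n ^ 2 := fun n => by simp only [hu]; rw [← pow_mul, pow_succ]
  have ulim : Tendsto u atTop (𝓝 0) :=
    (tendsto_pow_atTop_nhds_zero_of_lt_one h0.le h1).comp
      (tendsto_pow_atTop_atTop_of_one_lt (by norm_num))
  have rS := rec_gen (a := fun n => S 1 (u n)) (b := fun n => S (-1) (u n))
    (fun n => by simp only [us]; exact S_add (u0 n) (u1 n))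
    (fun n => by simp only [us]; exact S_prod (u0 n) (u1 n))
  have rF := rec_gen (a := fun n => F 1 (u n) ^ 2) (b := fun n => F (-1) (u n) ^ 2)
    (fun n => by simp only [us]; exact F_add (u0 n) (u1 n))
    (fun n => by simp only [us]; rw [← F_prod (u0 n) (u1 n)]; ring)
  have pS : ∀ n, 0 < S 1 (u n) := fun n => by linarith [(S_bounds (u0 n) (u1 n)).1]
  have pF : ∀ n, 0 < F 1 (u n) ^ 2 := fun n => by nlinarith [(F_bounds (u0 n) (u1 n)).1]
  have poS : ∀ n, 0 < (S 1 (u n) - S (-1) (u n)) / 2 := fun n =>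
    lt_of_lt_of_le (by have := u0 n; positivity) (So_bounds (u0 n) (u1 n)).1
  have poF : ∀ n, 0 < (F 1 (u n) ^ 2 - F (-1) (u n) ^ 2) / 2 := fun n =>
    lt_of_lt_of_le (by have := u0 n; positivity) (Fo_bounds (u0 n) (u1 n)).1
  have ev : ∀ g : ℝ → ℝ, ContinuousAt g 0 → g 0 = 1 → ∀ c : ℝ, 1 < c → ∀ᶠ n in atTop, g (u n) ≤ c := by
    intro g hg h1 c hc
    have := hg.tendsto.comp ulim
    rw [h1] at this
    exact (this.eventually_lt_const hc).mono (fun n h => h.le)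
  have c1 := ev (fun x => 1 + 4 * x / (1 - x)) (by
    apply ContinuousAt.add (by fun_prop) (ContinuousAt.div (by fun_prop) (by fun_prop) (by norm_num))) (by norm_num)
  have c2 := ev (fun x => 1 / (1 - x ^ 2)) (by
    apply ContinuousAt.div (by fun_prop) (by fun_prop) (by norm_num)) (by norm_num)
  have c3 := ev (fun x => (1 + 4 * x / (1 - x)) ^ 2) (by
    apply ContinuousAt.pow
    apply ContinuousAt.add (by fun_prop) (ContinuousAt.div (by fun_prop) (by fun_prop) (by norm_num))) (by norm_num)
  have c4 := ev (fun x => (1 + x ^ 2) / (1 - x ^ 2) * (1 + 4 * x ^ 4 / (1 - x ^ 4))) (by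
    apply ContinuousAt.mul
    · apply ContinuousAt.div (by fun_prop) (by fun_prop) (by norm_num)
    · apply ContinuousAt.add (by fun_prop) (ContinuousAt.div (by fun_prop) (by fun_prop) (by norm_num))) (by norm_num)
  have hu0 : u 0 = q := by simp [hu]
  have res1 := compare pS poS pF poF (fun n => (rS n).1) (fun n => (rS n).2) (fun n => (rF n).1)
    (fun n => (rF n).2) (by
      intro c hc
      filter_upwards [c1 c hc, c2 c hc] with n k1 k2
      have b1 := S_bounds (u0 n) (u1 n)
      have b2 := F_bounds (u0 n) (u1 n)
      have b3 := So_bounds (u0 n) (u1 n)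
      have b4 := Fo_bounds (u0 n) (u1 n)
      have hx := u0 n
      constructor
      · have : 1 ≤ F 1 (u n) ^ 2 := by nlinarith
        nlinarith
      · refine b3.2.trans ?_
        have : 4 * u n / (1 - u n ^ 2) = 1 / (1 - u n ^ 2) * (4 * u n) := by ring
        rw [this]
        apply mul_le_mul k2 b4.1 (by positivity) (by linarith))
  have res2 := compare pF poF pS poS (fun n => (rF n).1) (fun n => (rF n).2) (fun n => (rS n).1)
    (fun n => (rS n).2) (by
      intro c hc
      filter_upwards [c3 c hc, c4 c hc] with n k1 k2
      have b1 := S_bounds (u0 n) (u1 n)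
      have b2 := F_bounds (u0 n) (u1 n)
      have b3 := So_bounds (u0 n) (u1 n)
      have b4 := Fo_bounds (u0 n) (u1 n)
      have hx := u0 n
      constructor
      · have : F 1 (u n) ^ 2 ≤ (1 + 4 * u n / (1 - u n)) ^ 2 :=
          pow_le_pow_left₀ (by linarith) b2.2 2
        nlinarith
      · refine b4.2.trans ?_
        have : 4 * u n / (1 - u n ^ 2) * (1 + 4 * u n ^ 4 / (1 - u n ^ 4)) =
          (1 + u n ^ 2) / (1 - u n ^ 2) * (1 + 4 * u n ^ 4 / (1 - u n ^ 4)) *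
            (4 * u n / (1 + u n ^ 2)) := by
          have : 1 + u n ^ 2 ≠ 0 := by positivity
          field_simp
        rw [this]
        apply mul_le_mul k2 b3.1 (by positivity) (by linarith))
  simp only [hu0] at res1 res2
  exact le_antisymm res1 res2

lemma final_real {Q : ℝ} (h0 : 0 < Q) (h1 : Q < 1) :
    HasSum (fun n : ℤ => Q ^ (2 * n + 1) / (1 - Q ^ (2 * n + 1)) ^ 2 +
      Q ^ (2 * n) / (1 + Q ^ (2 * n)) ^ 2) (F 1 Q ^ 4 / 4) := by
  have hS := S_sq' (Or.inl rfl) h0 h1 (e := 1)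
  rw [two_squares h0 h1] at hS
  simp only [one_mul] at hS
  have hA := (ssq_summable h0 h1).hasSum.mul_left (1 / 4 : ℝ)
  have hsm : Summable (fun i : ℕ => Q ^ (2 * i + 1) / (1 - Q ^ (2 * i + 1)) ^ 2) := by
    have hg : Summable (fun i : ℕ => Q ^ i * (Q / (1 - Q) ^ 2)) :=
      (summable_geometric_of_lt_one h0.le h1).mul_right _
    have hp : 0 < (1 - Q) ^ 2 := by have : 0 < 1 - Q := by linarith
                                    positivity
    refine Summable.of_nonneg_of_le (fun i => by positivity) (fun i => ?_) hg
    rw [← mul_div_assoc]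
    have hle : Q ^ (2 * i + 1) ≤ Q := by
      have := pow_le_pow_of_le_one h0.le h1.le (show 1 ≤ 2 * i + 1 by omega)
      simpa using this
    apply div_le_div₀ (by positivity) _ hp
    · apply pow_le_pow_left₀ (by linarith); linarith
    · rw [← pow_succ]
      exact pow_le_pow_of_le_one h0.le h1.le (by omega)
  have hB := odd_fun_hasSum (f := fun m : ℤ => Q ^ m / (1 - Q ^ m) ^ 2) (by
    intro n
    by_cases hn : n = 0
    · simp [hn]
    · have hp : 0 < Q ^ n := by positivity
      have hne : Q ^ n ≠ 1 := by
        intro h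
        rw [zpow_eq_one_iff_right₀ h0.le h1.ne] at h
        exact hn h
      simp only [zpow_neg]
      generalize Q ^ n = x at *
      have h1 : 1 - x ≠ 0 := fun h => hne (by linarith)
      have h2 : 1 - x⁻¹ ≠ 0 := by
        intro h; apply h1; field_simp at h; linarith
      rw [div_eq_div_iff (pow_ne_zero 2 h2) (pow_ne_zero 2 h1)]
      field_simp
      ring) (a := ∑' i : ℕ, Q ^ (2 * i + 1) / (1 - Q ^ (2 * i + 1)) ^ 2)
    (hs_congr hsm.hasSum (fun i => by norm_cast) rfl)
  refine hs_congr (hB.add hA) (fun n => ?_) ?_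
  · have : Q ^ (2 * n) = (Q ^ n) ^ 2 := by rw [mul_comm, zpow_mul]; norm_cast
    rw [this]; unfold s; rw [div_pow]; ring
  · linarith [hS]

lemma phi_eq (Q : ℝ) : phi (Q : ℂ) = ((F 1 Q : ℝ) : ℂ) := by
  unfold phi ramTheta F
  rw [Complex.ofReal_tsum]
  congr 1; ext n
  rw [← pow_add, one_zpow, one_mul, Complex.ofReal_pow]
  congr 1
  have h1 : 2 ∣ n * (n + 1) := (Int.even_mul_succ_self n).two_dvd
  have h2 : 2 ∣ n * (n - 1) := (Int.even_mul_pred_self n).two_dvd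
  have p1 : 0 ≤ n * (n + 1) := by
    rcases lt_or_ge n 0 with h | h <;> nlinarith
  have p2 : 0 ≤ n * (n - 1) := by
    rcases lt_or_ge 0 n with h | h <;> nlinarith
  zify
  rw [Int.toNat_of_nonneg (by omega), Int.toNat_of_nonneg (by omega), sq_abs]
  have : n ^ 2 * 2 = n * (n + 1) + n * (n - 1) := by ring
  omega

end FourSq

theorem stmt17 (q : ℝ) (hq0 : 0 < q) (hq1 : q < 1) :
    (∑' n : ℤ, ((q : ℂ) ^ (10 * n + 5) / (1 - (q : ℂ) ^ (10 * n + 5)) ^ 2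
        + (q : ℂ) ^ (10 * n) / (1 + (q : ℂ) ^ (10 * n)) ^ 2))
      = phi ((q : ℂ) ^ 5) ^ 4 / 4 := by
  have h := FourSq.final_real (Q := q ^ 5) (by positivity) (pow_lt_one₀ hq0.le hq1 (by norm_num))
  have h2 := congrArg (fun x : ℝ => (x : ℂ)) h.tsum_eq
  simp only [Complex.ofReal_tsum] at h2
  rw [← Complex.ofReal_pow, FourSq.phi_eq]
  push_cast at h2 ⊢
  rw [← h2]
  congr 1; ext n
  have e1 : ((q : ℂ) ^ 5) ^ (2 * n + 1) = (q : ℂ) ^ (10 * n + 5) := by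
    rw [← zpow_natCast, ← zpow_mul]; congr 1; push_cast; ring
  have e2 : ((q : ℂ) ^ 5) ^ (2 * n) = (q : ℂ) ^ (10 * n) := by
    rw [← zpow_natCast, ← zpow_mul]; congr 1; push_cast; ring
  rw [e1, e2]
end
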